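/- Let d ≥ 1, let α = (α_1,…,α_d) be a multi-index with α_j > −1/2 for each j, and let β > 0 and λ > 0. Define the Bessel Laguerre potential J_λ^α f(x) = (1/Γ(λ)) ∫_0^∞ s^{λ−1} e^{−s} P_s^α f(x) ds. Then there exists C > 0, depending only on α, d, β, λ, such that for every bounded measurable f on (0,∞)^d satisfying sup_x |∂^n_t P_t^α f(x)| ≤ A t^{β−n} for all t > 0 (n the smallest integer greater than β), one has: sup_x |P_t^α(J_λ^α f)(x)| ≤ ∥f∥_∞ for all t > 0, and sup_x |∂^m_t P_t^α(J_λ^α f)(x)| ≤ C (∥f∥_∞ + A) t^{β+λ−m} for all t > 0, where m is the smallest integer greater than β+λ. In particular J_λ^α maps Lip_β(μ_α) boundedly into Lip_{β+λ}(μ_α). -/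

import Mathlib

open MeasureTheory Real Set

noncomputable def besselI (ν z : ℝ) : ℝ :=
  ∑' m : ℕ, (z / 2) ^ (2 * (m : ℝ) + ν) / (Nat.factorial m * Real.Gamma ((m : ℝ) + ν + 1))

/-- The positive orthant `(0,∞)^d`. -/
def posOrthant (d : ℕ) : Set (Fin d → ℝ) := Set.univ.pi fun _ => Set.Ioi 0

/-- The Poisson–Laguerre kernel `p_t^α(x,y)`. -/
noncomputable def plKernel (d : ℕ) (α : Fin d → ℝ) (t : ℝ) (x y : Fin d → ℝ) : ℝ :=
  (1 / (2 * Real.sqrt π)) *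
    ∫ r in Set.Ioo (0 : ℝ) 1,
      (t * Real.exp (t ^ 2 / (4 * Real.log r)) /
          ((1 - r) ^ d * (-Real.log r) ^ ((3 : ℝ) / 2))) *
        (∏ j, (y j / x j) ^ (α j / 2) *
            Real.exp (-((r * x j + y j) / (1 - r)) - α j * Real.log r / 2) *
            besselI (α j) (2 * Real.sqrt (r * x j * y j) / (1 - r))) / r

/-- The Poisson–Laguerre semigroup `P_t^α f`, with the convention `P_0^α f = f`. -/
noncomputable def plP (d : ℕ) (α : Fin d → ℝ) (t : ℝ)
    (f : (Fin d → ℝ) → ℝ) (x : Fin d → ℝ) : ℝ :=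
  if t = 0 then f x else ∫ y in posOrthant d, plKernel d α t x y * f y

/-- The Bessel Laguerre potential `J_λ^α f`. -/
noncomputable def besselLaguerrePotential (d : ℕ) (α : Fin d → ℝ) (lam : ℝ)
    (f : (Fin d → ℝ) → ℝ) (x : Fin d → ℝ) : ℝ :=
  (1 / Real.Gamma lam) *
    ∫ s in Set.Ioi (0 : ℝ), s ^ (lam - 1) * Real.exp (-s) * plP d α s f x

open scoped ENNReal

theorem integral_bind_of_integrable {X Y : Type*} [MeasurableSpace X] [MeasurableSpace Y]
    {μ : Measure X} {κ : X → Measure Y} (hκ : Measurable κ) {f : Y → ℝ}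
    (hf : Integrable f (μ.bind κ)) :
    ∫ y, f y ∂(μ.bind κ) = ∫ x, ∫ y, f y ∂κ x ∂μ := by
  let η : ProbabilityTheory.Kernel X Y := ⟨κ, hκ⟩
  let ξ : ProbabilityTheory.Kernel Unit X := ProbabilityTheory.Kernel.const Unit μ
  have h : (ProbabilityTheory.Kernel.comp η ξ) () = μ.bind κ := by
    rw [ProbabilityTheory.Kernel.comp_apply]; rfl
  have := ProbabilityTheory.Kernel.integral_comp (κ := ξ) (η := η) (a := ()) (f := f) (by rwa [h])
  rw [h] at this
  exact this

theorem lintegral_fin_prod_eq_prod {n : ℕ} {μ : Fin n → Measure ℝ} [∀ i, SigmaFinite (μ i)]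
    {f : Fin n → ℝ → ℝ≥0∞} (hf : ∀ i, Measurable (f i)) :
    ∫⁻ x : Fin n → ℝ, ∏ i, f i (x i) ∂(Measure.pi μ) = ∏ i, ∫⁻ x, f i x ∂(μ i) := by
  induction n with
  | zero => simp
  | succ n n_ih =>
      calc
        _ = ∫⁻ x : ℝ × (Fin n → ℝ), f 0 x.1 * ∏ i : Fin n, f (Fin.succ i) (x.2 i)
            ∂((μ 0).prod (Measure.pi (fun i ↦ μ i.succ))) := by
          rw [← ((measurePreserving_piFinSuccAbove μ 0).symm).lintegral_comp_emb
            (MeasurableEquiv.measurableEmbedding _)]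
          simp_rw [MeasurableEquiv.piFinSuccAbove_symm_apply, Fin.insertNthEquiv,
            Fin.prod_univ_succ, Fin.insertNth_zero, Equiv.coe_fn_mk, Fin.cons_succ,
            Fin.zero_succAbove, cast_eq, Fin.cons_zero]
        _ = (∫⁻ x, f 0 x ∂μ 0) * ∏ i : Fin n, ∫⁻ x, f (Fin.succ i) x ∂(μ i.succ) := by
          rw [← n_ih (fun i => hf i.succ),
            lintegral_prod_mul (g := fun x : Fin n → ℝ => ∏ i, f i.succ (x i)) (hf 0).aemeasurable
              (Finset.measurable_fun_prod _ fun i _ =>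
                (hf i.succ).comp (measurable_pi_apply i)).aemeasurable]
        _ = ∏ i, ∫⁻ x, f i x ∂(μ i) := by rw [Fin.prod_univ_succ]

/-- Finite measures on `[0,1]` are determined by their moments. -/
theorem measure_ext_of_moments {μ ν : Measure ℝ} [IsFiniteMeasure μ] [IsFiniteMeasure ν]
    (hμ : ∀ᵐ x ∂μ, x ∈ Icc (0 : ℝ) 1) (hν : ∀ᵐ x ∂ν, x ∈ Icc (0 : ℝ) 1)
    (h : ∀ n : ℕ, ∫⁻ x, ENNReal.ofReal (x ^ n) ∂μ = ∫⁻ x, ENNReal.ofReal (x ^ n) ∂ν) :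
    μ = ν := by
  have hint (ξ : Measure ℝ) [IsFiniteMeasure ξ] (hξ : ∀ᵐ x ∂ξ, x ∈ Icc (0 : ℝ) 1) (n : ℕ) :
      Integrable (fun x : ℝ => x ^ n) ξ := by
    refine Integrable.of_bound (by fun_prop) 1 ?_
    filter_upwards [hξ] with x hx
    rw [Real.norm_eq_abs, abs_of_nonneg (pow_nonneg hx.1 n)]
    exact pow_le_one₀ hx.1 hx.2
  have hpow (n : ℕ) : ∫ x, x ^ n ∂μ = ∫ x, x ^ n ∂ν := by
    rw [integral_eq_lintegral_of_nonneg_ae _ (by fun_prop), h,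
      ← integral_eq_lintegral_of_nonneg_ae _ (by fun_prop)]
    · filter_upwards [hν] with x hx using pow_nonneg hx.1 n
    · filter_upwards [hμ] with x hx using pow_nonneg hx.1 n
  have hintp (ξ : Measure ℝ) [IsFiniteMeasure ξ] (hξ : ∀ᵐ x ∂ξ, x ∈ Icc (0 : ℝ) 1)
      (p : Polynomial ℝ) : Integrable (fun x => p.eval x) ξ := by
    simp_rw [Polynomial.eval_eq_sum_range]
    exact integrable_finsetSum _ fun i _ => (hint ξ hξ i).const_mul _
  have hpoly (p : Polynomial ℝ) : ∫ x, p.eval x ∂μ = ∫ x, p.eval x ∂ν := by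
    simp_rw [Polynomial.eval_eq_sum_range]
    rw [integral_finsetSum _ fun i _ => (hint μ hμ i).const_mul _,
      integral_finsetSum _ fun i _ => (hint ν hν i).const_mul _]
    simp_rw [integral_const_mul, hpow]
  refine ext_of_forall_integral_eq_of_IsFiniteMeasure fun f => ?_
  have hclose (ξ : Measure ℝ) [IsFiniteMeasure ξ] (hξ : ∀ᵐ x ∂ξ, x ∈ Icc (0 : ℝ) 1)
      (p : Polynomial ℝ) (ε : ℝ) (hp : ∀ x ∈ Icc (0 : ℝ) 1, |p.eval x - f x| < ε) :
      |(∫ x, p.eval x ∂ξ) - ∫ x, f x ∂ξ| ≤ ε * ξ.real univ := by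
    rw [← integral_sub (hintp ξ hξ p) (f.integrable ξ)]
    refine norm_integral_le_of_norm_le_const (μ := ξ) (f := fun x => p.eval x - f x) ?_
    filter_upwards [hξ] with x hx using (hp x hx).le
  refine eq_of_abs_sub_le_all fun ε hε => ?_
  set c : ℝ := μ.real univ + ν.real univ + 1 with hc
  have hcpos : 0 < c := by positivity
  obtain ⟨p, hp⟩ := exists_polynomial_near_of_continuousOn 0 1 f f.continuous.continuousOn
    (ε / c) (by positivity)
  have h1 := hclose μ hμ p _ hp
  have h2 := hclose ν hν p _ hp
  rw [hpoly] at h1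
  have h3 : ε / c * μ.real univ + ε / c * ν.real univ ≤ ε := by
    rw [← mul_add, div_mul_eq_mul_div, div_le_iff₀ hcpos]
    gcongr
    linarith
  rw [abs_le] at *
  constructor <;> linarith [h1.1, h1.2, h2.1, h2.2]

/-- Finite measures on `[0,∞)` are determined by their Laplace transforms. -/
theorem measure_ext_of_laplace {μ ν : Measure ℝ} [IsFiniteMeasure μ] [IsFiniteMeasure ν]
    (hμ : ∀ᵐ x ∂μ, 0 ≤ x) (hν : ∀ᵐ x ∂ν, 0 ≤ x)
    (h : ∀ n : ℕ, ∫⁻ x, ENNReal.ofReal (exp (-(n * x))) ∂μ =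
      ∫⁻ x, ENNReal.ofReal (exp (-(n * x))) ∂ν) : μ = ν := by
  have hm : Measurable fun x : ℝ => exp (-x) := by fun_prop
  have key : μ.map (fun x : ℝ => exp (-x)) = ν.map (fun x : ℝ => exp (-x)) := by
    refine measure_ext_of_moments ?_ ?_ fun n => ?_
    · refine (ae_map_iff (p := fun x => x ∈ Icc (0 : ℝ) 1) hm.aemeasurable measurableSet_Icc).2 ?_
      filter_upwards [hμ] with x hx using ⟨(exp_pos _).le, by simpa using hx⟩
    · refine (ae_map_iff (p := fun x => x ∈ Icc (0 : ℝ) 1) hm.aemeasurable measurableSet_Icc).2 ?_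
      filter_upwards [hν] with x hx using ⟨(exp_pos _).le, by simpa using hx⟩
    · rw [lintegral_map (by fun_prop) hm, lintegral_map (by fun_prop) hm]
      simpa only [← exp_nat_mul, mul_neg] using h n
  have h2 := congrArg (fun ξ : Measure ℝ => ξ.map (fun x => -log x)) key
  have hm2 : Measurable fun x : ℝ => -log x := by fun_prop
  simp only [Measure.map_map hm2 hm] at h2
  have : (fun x : ℝ => -log x) ∘ (fun x : ℝ => exp (-x)) = id := by
    funext x; simp
  simpa [this] using h2

theorem hasDerivAt_integral_family {Y : Type*} [MeasurableSpace Y] {μ : Measure Y}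
    {w : ℕ → ℝ → Y → ℝ} (hmeas : ∀ k, ∀ t > 0, AEStronglyMeasurable (w k t) μ)
    (hder : ∀ᵐ y ∂μ, ∀ k, ∀ t > 0, HasDerivAt (fun s => w k s y) (w (k + 1) t y) t)
    (hbound : ∀ k, ∀ t > 0, ∃ g : Y → ℝ, Integrable g μ ∧
      ∀ᵐ y ∂μ, ∀ s ∈ Ioo (t / 2) (2 * t), |w k s y| ≤ g y)
    (k : ℕ) {t : ℝ} (ht : 0 < t) :
    HasDerivAt (fun s => ∫ y, w k s y ∂μ) (∫ y, w (k + 1) t y ∂μ) t := by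
  obtain ⟨g, hg, hgb⟩ := hbound (k + 1) t ht
  obtain ⟨g0, hg0, hgb0⟩ := hbound k t ht
  have hmem : Ioo (t / 2) (2 * t) ∈ nhds t := Ioo_mem_nhds (by linarith) (by linarith)
  refine (hasDerivAt_integral_of_dominated_loc_of_deriv_le (bound := g) hmem ?_ ?_
    (hmeas (k + 1) t ht) ?_ hg ?_).2
  · filter_upwards [lt_mem_nhds ht] with s hs using hmeas k s hs
  · refine hg0.mono' (hmeas k t ht) ?_
    filter_upwards [hgb0] with y hy using hy t ⟨by linarith, by linarith⟩
  · exact hgb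
  · filter_upwards [hder] with y hy s hs using hy k s (by linarith [hs.1])

theorem iteratedDeriv_eq_of_hasDerivAt_family {u : ℝ → ℝ} {w : ℕ → ℝ → ℝ}
    (h0 : ∀ t > 0, u t = w 0 t) (h : ∀ k, ∀ t > 0, HasDerivAt (w k) (w (k + 1) t) t) (k : ℕ) :
    ∀ t > 0, iteratedDeriv k u t = w k t := by
  induction k with
  | zero => simpa using h0
  | succ k ih =>
    intro t ht
    rw [iteratedDeriv_succ]
    have : iteratedDeriv k u =ᶠ[nhds t] w k := by
      filter_upwards [lt_mem_nhds ht] with s hs using ih s hs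
    rw [this.deriv_eq, (h k t ht).deriv]

/-- The weight of the `m`-th Gamma density in the Laguerre heat kernel, times that density. -/
noncomputable def laguerreTerm (a r x y : ℝ) (m : ℕ) : ℝ :=
  exp (-(r * x / (1 - r))) * (r * x / (1 - r)) ^ m / Nat.factorial m *
    (y ^ ((m : ℝ) + a) * exp (-(y / (1 - r))) /
      (Real.Gamma ((m : ℝ) + a + 1) * (1 - r) ^ ((m : ℝ) + a + 1)))

/-- The one-dimensional Laguerre heat kernel, as a Poisson mixture of Gamma densities. -/
noncomputable def laguerreDensity (a r x y : ℝ) : ℝ≥0∞ :=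
  ∑' m : ℕ, ENNReal.ofReal (laguerreTerm a r x y m)

theorem measurable_laguerreDensity (a : ℝ) :
    Measurable fun p : ℝ × ℝ × ℝ => laguerreDensity a p.1 p.2.1 p.2.2 := by
  unfold laguerreDensity laguerreTerm
  refine Measurable.tsum fun m => ?_
  fun_prop

theorem laguerreTerm_nonneg {a r x y : ℝ} (ha : -1 < a) (hr : r ∈ Ioo (0 : ℝ) 1) (hx : 0 < x)
    (hy : 0 < y) (m : ℕ) : 0 ≤ laguerreTerm a r x y m := by
  have h1 : 0 < 1 - r := by linarith [hr.2]
  have h0 := hr.1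
  have hG : 0 < Real.Gamma ((m : ℝ) + a + 1) :=
    Real.Gamma_pos_of_pos (by have : (0 : ℝ) ≤ m := m.cast_nonneg; linarith)
  unfold laguerreTerm
  positivity

theorem laguerreTerm_eq {a r x y : ℝ} (hr : r ∈ Ioo (0 : ℝ) 1) (hx : 0 < x)
    (hy : 0 < y) (m : ℕ) :
    laguerreTerm a r x y m = 1 / (1 - r) * ((y / x) ^ (a / 2) *
      exp (-((r * x + y) / (1 - r)) - a * log r / 2)) *
      ((2 * √(r * x * y) / (1 - r) / 2) ^ (2 * (m : ℝ) + a) /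
        (Nat.factorial m * Real.Gamma ((m : ℝ) + a + 1))) := by
  have h1 : 0 < 1 - r := by linarith [hr.2]
  have h0 := hr.1
  have hZ : 2 * √(r * x * y) / (1 - r) / 2 = √(r * x * y) / (1 - r) := by ring
  have key : (r * x / (1 - r)) ^ m * y ^ ((m : ℝ) + a) / (1 - r) ^ ((m : ℝ) + a + 1) =
      1 / (1 - r) * ((y / x) ^ (a / 2) * exp (-(a * log r / 2))) *
        (√(r * x * y) / (1 - r)) ^ (2 * (m : ℝ) + a) := by
    have e1 : (1 - r) = exp (log (1 - r)) := (exp_log h1).symm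
    rw [← rpow_natCast, rpow_def_of_pos (by positivity), rpow_def_of_pos hy, rpow_def_of_pos h1,
      rpow_def_of_pos (by positivity), rpow_def_of_pos (by positivity),
      log_div (by positivity) h1.ne', log_div (by positivity) h1.ne', log_div hy.ne' hx.ne',
      log_sqrt (by positivity), log_mul (by positivity) hy.ne', log_mul h0.ne' hx.ne',
      show 1 / (1 - r) = exp (-log (1 - r)) by rw [exp_neg, exp_log h1, one_div],
      ← exp_add, ← exp_sub, ← exp_add, ← exp_add, ← exp_add]
    congr 1
    ring
  have hexp : exp (-((r * x + y) / (1 - r)) - a * log r / 2) =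
      exp (-(r * x / (1 - r))) * exp (-(y / (1 - r))) * exp (-(a * log r / 2)) := by
    rw [← exp_add, ← exp_add]; congr 1; ring
  rw [hZ, hexp]
  unfold laguerreTerm
  calc _ = exp (-(r * x / (1 - r))) * exp (-(y / (1 - r))) /
        (Nat.factorial m * Real.Gamma ((m : ℝ) + a + 1)) *
        ((r * x / (1 - r)) ^ m * y ^ ((m : ℝ) + a) / (1 - r) ^ ((m : ℝ) + a + 1)) := by
        simp only [div_eq_mul_inv, mul_inv]; ring
    _ = _ := by rw [key]; ring

theorem toReal_laguerreDensity {a r x y : ℝ} (ha : -1 < a) (hr : r ∈ Ioo (0 : ℝ) 1) (hx : 0 < x)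
    (hy : 0 < y) :
    (laguerreDensity a r x y).toReal = 1 / (1 - r) * ((y / x) ^ (a / 2) *
      exp (-((r * x + y) / (1 - r)) - a * log r / 2) *
      besselI a (2 * √(r * x * y) / (1 - r))) := by
  unfold laguerreDensity besselI
  rw [ENNReal.tsum_toReal_eq fun _ => ENNReal.ofReal_ne_top, ← mul_assoc, ← tsum_mul_left]
  refine tsum_congr fun m => ?_
  rw [ENNReal.toReal_ofReal (laguerreTerm_nonneg ha hr hx hy m), laguerreTerm_eq hr hx hy]

/-- The one-dimensional Laguerre heat kernel as a measure. -/
noncomputable def laguerreMeasure (a r x : ℝ) : Measure ℝ :=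
  (volume.restrict (Ioi 0)).withDensity (laguerreDensity a r x)

theorem measurable_laguerreDensity_right (a r x : ℝ) : Measurable (laguerreDensity a r x) := by
  have h : Measurable fun y : ℝ => (r, x, y) := by fun_prop
  have hcomp := (measurable_laguerreDensity a).comp h
  exact hcomp

theorem measurable_laguerreMeasure (a : ℝ) :
    Measurable fun p : ℝ × ℝ => laguerreMeasure a p.1 p.2 := by
  refine Measure.measurable_of_measurable_coe _ fun s hs => ?_
  simp_rw [laguerreMeasure, withDensity_apply _ hs]
  refine Measurable.lintegral_prod_right' (f := fun q : (ℝ × ℝ) × ℝ =>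
    laguerreDensity a q.1.1 q.1.2 q.2) ?_
  have h : Measurable fun q : (ℝ × ℝ) × ℝ => (q.1.1, q.1.2, q.2) := by fun_prop
  have hcomp := (measurable_laguerreDensity a).comp h
  exact hcomp

theorem ae_laguerreMeasure_pos (a r x : ℝ) : ∀ᵐ y ∂laguerreMeasure a r x, 0 < y :=
  (withDensity_absolutelyContinuous _ _).ae_le (ae_restrict_mem measurableSet_Ioi)

theorem lintegral_laguerreTerm {a r x s : ℝ} (ha : -1 < a) (hr : r ∈ Ioo (0 : ℝ) 1) (hx : 0 < x)
    (hs : 0 ≤ s) (m : ℕ) :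
    ∫⁻ y in Ioi 0, ENNReal.ofReal (laguerreTerm a r x y m) * ENNReal.ofReal (exp (-(s * y))) =
      ENNReal.ofReal (exp (-(r * x / (1 - r))) * (r * x / (1 - r)) ^ m / Nat.factorial m *
        (1 / (1 + (1 - r) * s)) ^ ((m : ℝ) + a + 1)) := by
  have h1 : 0 < 1 - r := by linarith [hr.2]
  have h0 := hr.1
  have hm : (0 : ℝ) ≤ m := m.cast_nonneg
  have hp : 0 < (m : ℝ) + a + 1 := by linarith
  have hG : 0 < Real.Gamma ((m : ℝ) + a + 1) := Real.Gamma_pos_of_pos hp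
  have hq : 0 < 1 / (1 - r) + s := by positivity
  have hI := Real.integral_rpow_mul_exp_neg_mul_Ioi hp hq
  have hint : IntegrableOn (fun y : ℝ => y ^ ((m : ℝ) + a + 1 - 1) *
      exp (-((1 / (1 - r) + s) * y))) (Ioi 0) := by
    by_contra hcon
    rw [integral_undef hcon] at hI
    have : 0 < (1 / (1 / (1 - r) + s)) ^ ((m : ℝ) + a + 1) * Real.Gamma ((m : ℝ) + a + 1) := by
      positivity
    linarith
  set c : ℝ := exp (-(r * x / (1 - r))) * (r * x / (1 - r)) ^ m / Nat.factorial m /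
      (Real.Gamma ((m : ℝ) + a + 1) * (1 - r) ^ ((m : ℝ) + a + 1)) with hc
  have hcpos : 0 ≤ c := by positivity
  have heq : ∀ y ∈ Ioi (0 : ℝ), ENNReal.ofReal (laguerreTerm a r x y m) *
      ENNReal.ofReal (exp (-(s * y))) = ENNReal.ofReal (c * (y ^ ((m : ℝ) + a + 1 - 1) *
      exp (-((1 / (1 - r) + s) * y)))) := by
    intro y hy
    rw [← ENNReal.ofReal_mul (laguerreTerm_nonneg ha hr hx hy m)]
    congr 1
    rw [show -((1 / (1 - r) + s) * y) = -(y / (1 - r)) + -(s * y) by ring, exp_add,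
      add_sub_cancel_right, hc]
    unfold laguerreTerm
    ring
  rw [setLIntegral_congr_fun measurableSet_Ioi heq,
    ← ofReal_integral_eq_lintegral_ofReal (hint.const_mul c)]
  · rw [integral_const_mul, hI, hc,
      show 1 / (1 / (1 - r) + s) = (1 - r) * (1 / (1 + (1 - r) * s)) by field_simp,
      mul_rpow h1.le (by positivity)]
    congr 1
    field_simp
  · refine (ae_restrict_mem measurableSet_Ioi).mono fun y hy => ?_
    have : (0 : ℝ) < y := hy
    simp only [Pi.zero_apply]
    positivity

/-- The Laplace transform of the one-dimensional Laguerre heat kernel. -/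
theorem laplace_laguerreMeasure {a r x s : ℝ} (ha : -1 < a) (hr : r ∈ Ioo (0 : ℝ) 1) (hx : 0 < x)
    (hs : 0 ≤ s) :
    ∫⁻ y, ENNReal.ofReal (exp (-(s * y))) ∂laguerreMeasure a r x =
      ENNReal.ofReal ((1 / (1 + (1 - r) * s)) ^ (a + 1) *
        exp (-(r * s / (1 + (1 - r) * s) * x))) := by
  have h1 : 0 < 1 - r := by linarith [hr.2]
  have h0 := hr.1
  rw [laguerreMeasure, lintegral_withDensity_eq_lintegral_mul _
    (measurable_laguerreDensity_right a r x) (by fun_prop)]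
  simp only [Pi.mul_apply, laguerreDensity, ← ENNReal.tsum_mul_right]
  rw [lintegral_tsum]
  · simp_rw [lintegral_laguerreTerm ha hr hx hs]
    set θ := 1 / (1 + (1 - r) * s) with hθ
    have hθpos : 0 < θ := by positivity
    set l := r * x / (1 - r) with hl
    have hlpos : 0 < l := by positivity
    have hterm (m : ℕ) : exp (-l) * l ^ m / Nat.factorial m * θ ^ ((m : ℝ) + a + 1) =
        exp (-l) * θ ^ (a + 1) * ((l * θ) ^ m / Nat.factorial m) := by
      rw [add_assoc, rpow_add hθpos, rpow_natCast, mul_pow]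
      ring
    have hsum : HasSum (fun m : ℕ => exp (-l) * l ^ m / Nat.factorial m * θ ^ ((m : ℝ) + a + 1))
        (exp (-l) * θ ^ (a + 1) * exp (l * θ)) := by
      simp_rw [hterm]
      rw [Real.exp_eq_exp_ℝ]
      exact (NormedSpace.expSeries_div_hasSum_exp (l * θ)).mul_left _
    rw [← ENNReal.ofReal_tsum_of_nonneg (fun m => by positivity) hsum.summable, hsum.tsum_eq]
    congr 1
    rw [mul_right_comm, ← exp_add, mul_comm]
    congr 2
    rw [hθ, hl]
    field_simp
    ring
  · intro m
    unfold laguerreTerm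
    fun_prop

theorem isProbabilityMeasure_laguerreMeasure {a r x : ℝ} (ha : -1 < a) (hr : r ∈ Ioo (0 : ℝ) 1)
    (hx : 0 < x) : IsProbabilityMeasure (laguerreMeasure a r x) := by
  constructor
  simpa using laplace_laguerreMeasure ha hr hx le_rfl

/-- The semigroup property of the one-dimensional Laguerre heat kernel. -/
theorem laguerreMeasure_bind {a r r' x : ℝ} (ha : -1 < a) (hr : r ∈ Ioo (0 : ℝ) 1)
    (hr' : r' ∈ Ioo (0 : ℝ) 1) (hx : 0 < x) :
    (laguerreMeasure a r x).bind (laguerreMeasure a r') = laguerreMeasure a (r * r') x := by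
  have h1 : 0 < 1 - r := by linarith [hr.2]
  have h1' : 0 < 1 - r' := by linarith [hr'.2]
  have hrr : r * r' ∈ Ioo (0 : ℝ) 1 :=
    ⟨mul_pos hr.1 hr'.1, mul_lt_one_of_nonneg_of_lt_one_left hr.1.le hr.2 hr'.2.le⟩
  have h1'' : 0 < 1 - r * r' := by linarith [hrr.2]
  have hpair : Measurable fun y : ℝ => (r', y) := by fun_prop
  have hcomp := (measurable_laguerreMeasure a).comp hpair
  have hmeas : Measurable (laguerreMeasure a r') := hcomp
  have := isProbabilityMeasure_laguerreMeasure ha hr hx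
  have := isProbabilityMeasure_laguerreMeasure ha hrr hx
  have hprob : IsProbabilityMeasure ((laguerreMeasure a r x).bind (laguerreMeasure a r')) := by
    constructor
    rw [Measure.bind_apply .univ hmeas.aemeasurable]
    rw [lintegral_congr_ae (g := fun _ => 1), lintegral_one, measure_univ]
    filter_upwards [ae_laguerreMeasure_pos a r x] with y hy
    have := isProbabilityMeasure_laguerreMeasure ha hr' hy
    exact measure_univ
  refine measure_ext_of_laplace ?_ ?_ fun n => ?_
  · have hset : MeasurableSet {y : ℝ | ¬0 ≤ y} := measurableSet_Ici.compl
    rw [ae_iff, Measure.bind_apply hset hmeas.aemeasurable, lintegral_congr (g := fun _ => 0), lintegral_zero]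
    intro y
    rw [← ae_iff]
    exact (ae_laguerreMeasure_pos a r' y).mono fun z hz => hz.le
  · exact (ae_laguerreMeasure_pos a _ x).mono fun z hz => hz.le
  · have hn : (0 : ℝ) ≤ n := n.cast_nonneg
    rw [Measure.lintegral_bind hmeas.aemeasurable (by fun_prop)]
    have heq : ∀ᵐ y ∂laguerreMeasure a r x,
        ∫⁻ z, ENNReal.ofReal (exp (-(n * z))) ∂laguerreMeasure a r' y =
        ENNReal.ofReal ((1 / (1 + (1 - r') * n)) ^ (a + 1)) *
          ENNReal.ofReal (exp (-(r' * n / (1 + (1 - r') * n) * y))) := by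
      filter_upwards [ae_laguerreMeasure_pos a r x] with y hy
      rw [laplace_laguerreMeasure ha hr' hy hn, ENNReal.ofReal_mul (by positivity)]
    have h0' := hr'.1
    have h0 := hr.1
    rw [lintegral_congr_ae heq, lintegral_const_mul _ (by fun_prop),
      laplace_laguerreMeasure ha hr hx (by positivity), laplace_laguerreMeasure ha hrr hx hn,
      ← ENNReal.ofReal_mul (by positivity), ← mul_assoc, ← mul_rpow (by positivity) (by positivity)]
    have e : 1 + (1 - r * r') * n = (1 + (1 - r') * n) *
        (1 + (1 - r) * (r' * n / (1 + (1 - r') * n))) := by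
      field_simp
      ring
    rw [e]
    congr 3
    · field_simp
    · field_simp

theorem lintegral_exp_neg_sub_div_sq {c : ℝ} (hc : 0 < c) :
    ∫⁻ v in Ioi (0 : ℝ), ENNReal.ofReal (exp (-(v - c / v) ^ 2)) = ENNReal.ofReal (√π / 2) := by
  set L := ∫⁻ v in Ioi (0 : ℝ), ENNReal.ofReal (exp (-(v - c / v) ^ 2)) with hL
  have himg1 : (fun v : ℝ => c / v) '' Ioi 0 = Ioi 0 := by
    ext w
    constructor
    · rintro ⟨v, hv, rfl⟩
      exact div_pos hc hv
    · intro hw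
      exact ⟨c / w, div_pos hc hw, by have : w ≠ 0 := ne_of_gt hw; simp only; field_simp⟩
  have himg2 : (fun v : ℝ => v - c / v) '' Ioi 0 = univ := by
    refine eq_univ_of_forall fun w => ?_
    have hs : √(w ^ 2 + 4 * c) ^ 2 = w ^ 2 + 4 * c := sq_sqrt (by positivity)
    have hlt : |w| < √(w ^ 2 + 4 * c) := by
      rw [← sqrt_sq_eq_abs]
      exact sqrt_lt_sqrt (by positivity) (by linarith)
    have hpos : 0 < (w + √(w ^ 2 + 4 * c)) / 2 := by linarith [neg_abs_le w]
    refine ⟨(w + √(w ^ 2 + 4 * c)) / 2, hpos, ?_⟩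
    have : w + √(w ^ 2 + 4 * c) ≠ 0 := by linarith
    simp only
    field_simp
    nlinarith
  have hinj1 : InjOn (fun v : ℝ => c / v) (Ioi 0) := by
    intro v hv w hw h
    have hv' : v ≠ 0 := ne_of_gt hv
    have hw' : w ≠ 0 := ne_of_gt hw
    simp only at h
    field_simp at h
    exact h.symm
  have hinj2 : InjOn (fun v : ℝ => v - c / v) (Ioi 0) := by
    have : StrictMonoOn (fun v : ℝ => v - c / v) (Ioi 0) := by
      intro v hv w hw hvw
      have := div_lt_div_of_pos_left hc hv hvw
      simp only
      linarith
    exact this.injOn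
  have hd (v : ℝ) (hv : v ∈ Ioi (0 : ℝ)) : HasDerivAt (fun v : ℝ => c / v) (-(c / v ^ 2)) v := by
    have := (hasDerivAt_inv (ne_of_gt hv)).const_mul c
    simpa [div_eq_mul_inv] using this
  have e1 : L = ∫⁻ v in Ioi (0 : ℝ), ENNReal.ofReal (c / v ^ 2) *
      ENNReal.ofReal (exp (-(v - c / v) ^ 2)) := by
    rw [hL]
    conv_lhs => rw [← himg1]
    rw [lintegral_image_eq_lintegral_abs_deriv_mul measurableSet_Ioi
      (fun v hv => (hd v hv).hasDerivWithinAt) hinj1]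
    refine setLIntegral_congr_fun measurableSet_Ioi fun v hv => ?_
    have hv' : v ≠ 0 := ne_of_gt hv
    rw [abs_neg, abs_of_nonneg (by positivity), show c / (c / v) = v by field_simp,
      show (c / v - v) ^ 2 = (v - c / v) ^ 2 by ring]
  have e2 : ENNReal.ofReal (√π) = L + L := by
    nth_rewrite 2 [e1]
    rw [hL, ← lintegral_add_left (by fun_prop)]
    have hG : ENNReal.ofReal (√π) = ∫⁻ w : ℝ, ENNReal.ofReal (exp (-w ^ 2)) := by
      have h1 := integral_gaussian 1
      have h2 := integrable_exp_neg_mul_sq one_pos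
      simp only [neg_mul, one_mul, div_one] at h1 h2
      rw [← ofReal_integral_eq_lintegral_ofReal h2 (ae_of_all _ fun _ => (exp_pos _).le), h1]
    rw [hG, ← setLIntegral_univ, ← himg2, lintegral_image_eq_lintegral_abs_deriv_mul
      measurableSet_Ioi (fun v hv => ((hasDerivAt_id' v).fun_sub (hd v hv)).hasDerivWithinAt) hinj2]
    refine setLIntegral_congr_fun measurableSet_Ioi fun v hv => ?_
    rw [sub_neg_eq_add, abs_of_nonneg (by positivity),
      ENNReal.ofReal_add zero_le_one (by positivity), add_mul, ENNReal.ofReal_one, one_mul]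
  have e3 : ENNReal.ofReal (√π) = ENNReal.ofReal (√π / 2) + ENNReal.ofReal (√π / 2) := by
    rw [← ENNReal.ofReal_add (by positivity) (by positivity), add_halves]
  have hfin : L ≠ ∞ := by
    intro h
    rw [h] at e2
    simp at e2
  have h4 := congrArg ENNReal.toReal (e2.symm.trans e3)
  rw [ENNReal.toReal_add hfin hfin, ENNReal.toReal_add ENNReal.ofReal_ne_top ENNReal.ofReal_ne_top]
    at h4
  rw [← ENNReal.toReal_eq_toReal_iff' hfin ENNReal.ofReal_ne_top]
  linarith

theorem lintegral_exp_neg_sq_sub_div_sq {c : ℝ} (hc : 0 ≤ c) :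
    ∫⁻ v in Ioi (0 : ℝ), ENNReal.ofReal (exp (-v ^ 2 - c ^ 2 / v ^ 2)) =
      ENNReal.ofReal (√π / 2 * exp (-(2 * c))) := by
  rcases hc.eq_or_lt with rfl | hc
  · have h1 := integral_gaussian_Ioi 1
    have h2 := (integrable_exp_neg_mul_sq one_pos).integrableOn (s := Ioi 0)
    simp only [neg_mul, one_mul, div_one] at h1 h2
    simp only [ne_eq, OfNat.ofNat_ne_zero, not_false_eq_true, zero_pow, zero_div, sub_zero,
      mul_zero, neg_zero, exp_zero, mul_one]
    rw [← h1, ofReal_integral_eq_lintegral_ofReal h2 (ae_of_all _ fun _ => (exp_pos _).le)]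
  · rw [mul_comm, ENNReal.ofReal_mul (exp_pos _).le, ← lintegral_exp_neg_sub_div_sq hc,
      ← lintegral_const_mul _ (by fun_prop)]
    refine setLIntegral_congr_fun measurableSet_Ioi fun v hv => ?_
    have hv' : v ≠ 0 := ne_of_gt hv
    rw [← ENNReal.ofReal_mul (exp_pos _).le, ← exp_add]
    congr 2
    field_simp
    ring

/-- The density of the one-sided stable law of index `1/2`, in the variable `r = exp (-u)`. -/
noncomputable def stableDensity (t r : ℝ) : ℝ :=
  t * exp (t ^ 2 / (4 * log r)) / (2 * √π * (-log r) ^ ((3 : ℝ) / 2) * r)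

/-- The one-sided stable law of index `1/2`, in the variable `r = exp (-u)`. -/
noncomputable def stableMeasure (t : ℝ) : Measure ℝ :=
  (volume.restrict (Ioo 0 1)).withDensity fun r => ENNReal.ofReal (stableDensity t r)

theorem measurable_stableDensity : Measurable fun p : ℝ × ℝ => stableDensity p.1 p.2 := by
  unfold stableDensity
  fun_prop

theorem measurable_stableDensity_right (t : ℝ) : Measurable (stableDensity t) := by
  unfold stableDensity
  fun_prop

theorem stableDensity_nonneg {t r : ℝ} (ht : 0 ≤ t) (hr : r ∈ Ioo (0 : ℝ) 1) :
    0 ≤ stableDensity t r := by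
  have h0 := hr.1
  have : 0 < -log r := by linarith [log_neg hr.1 hr.2]
  unfold stableDensity
  positivity

theorem ae_stableMeasure_mem (t : ℝ) : ∀ᵐ r ∂stableMeasure t, r ∈ Ioo (0 : ℝ) 1 :=
  (withDensity_absolutelyContinuous _ _).ae_le (ae_restrict_mem measurableSet_Ioo)

theorem lintegral_pow_stableMeasure {t : ℝ} (ht : 0 < t) (n : ℕ) :
    ∫⁻ r, ENNReal.ofReal (r ^ n) ∂stableMeasure t = ENNReal.ofReal (exp (-(t * √n))) := by
  rw [stableMeasure, lintegral_withDensity_eq_lintegral_mul _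
    (measurable_stableDensity_right t).ennreal_ofReal (by fun_prop)]
  have hpos (v : ℝ) (hv : v ∈ Ioi (0 : ℝ)) : 0 < t ^ 2 / (4 * v ^ 2) := by
    have : (0 : ℝ) < v := hv
    positivity
  have himg : (fun v : ℝ => exp (-(t ^ 2 / (4 * v ^ 2)))) '' Ioi 0 = Ioo 0 1 := by
    ext r
    constructor
    · rintro ⟨v, hv, rfl⟩
      exact ⟨exp_pos _, by simpa using hpos v hv⟩
    · intro hr
      have hl : 0 < -log r := by linarith [log_neg hr.1 hr.2]
      refine ⟨t / (2 * √(-log r)), mem_Ioi.2 (by positivity), ?_⟩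
      have : t ^ 2 / (4 * (t / (2 * √(-log r))) ^ 2) = -log r := by
        rw [div_pow, mul_pow, sq_sqrt hl.le]
        field_simp
        norm_num
      simp only [this, neg_neg, exp_log hr.1]
  have hinj : InjOn (fun v : ℝ => exp (-(t ^ 2 / (4 * v ^ 2)))) (Ioi 0) := by
    intro v hv w hw h
    have hv' : (0 : ℝ) < v := hv
    have hw' : (0 : ℝ) < w := hw
    have h2 : t ^ 2 / (4 * v ^ 2) = t ^ 2 / (4 * w ^ 2) := by
      simpa using exp_injective h
    field_simp at h2
    exact ((pow_left_inj₀ hw'.le hv'.le two_ne_zero).1 h2).symm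
  have hd (v : ℝ) (hv : v ∈ Ioi (0 : ℝ)) :
      HasDerivAt (fun v : ℝ => exp (-(t ^ 2 / (4 * v ^ 2))))
        (exp (-(t ^ 2 / (4 * v ^ 2))) * (t ^ 2 / (2 * v ^ 3))) v := by
    have hv' : (0 : ℝ) < v := hv
    have h1 := (((hasDerivAt_pow 2 v).const_mul 4).fun_inv (by positivity)).const_mul (t ^ 2)
    have h2 := h1.fun_neg.exp
    simp only [← div_eq_mul_inv] at h2
    convert h2 using 2
    field_simp
    norm_num
    ring
  rw [← himg, lintegral_image_eq_lintegral_abs_deriv_mul measurableSet_Ioi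
    (fun v hv => (hd v hv).hasDerivWithinAt) hinj]
  have hn : (0 : ℝ) ≤ n := n.cast_nonneg
  have hG := lintegral_exp_neg_sq_sub_div_sq (c := t * √n / 2) (by positivity)
  have hgoal : ENNReal.ofReal (exp (-(t * √n))) =
      ENNReal.ofReal (2 / √π) * ENNReal.ofReal (√π / 2 * exp (-(2 * (t * √n / 2)))) := by
    rw [← ENNReal.ofReal_mul (by positivity), ← mul_assoc,
      show 2 / √π * (√π / 2) = 1 by field_simp, one_mul, mul_div_cancel₀ _ two_ne_zero]
  rw [hgoal, ← hG, ← lintegral_const_mul _ (by fun_prop)]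
  refine setLIntegral_congr_fun measurableSet_Ioi fun v hv => ?_
  have hv' : (0 : ℝ) < v := hv
  have hE : exp (-(t ^ 2 / (4 * v ^ 2))) ∈ Ioo (0 : ℝ) 1 := by
    rw [← himg]; exact ⟨v, hv, rfl⟩
  simp only [Pi.mul_apply]
  rw [abs_of_nonneg (by positivity), ← ENNReal.ofReal_mul (stableDensity_nonneg ht.le hE),
    ← ENNReal.ofReal_mul (by positivity), ← ENNReal.ofReal_mul (by positivity)]
  congr 1
  unfold stableDensity
  rw [log_exp, neg_neg]
  have e1 : (t ^ 2 / (4 * v ^ 2)) ^ ((3 : ℝ) / 2) = (t / (2 * v)) ^ 3 := by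
    rw [show t ^ 2 / (4 * v ^ 2) = (t / (2 * v)) ^ (2 : ℝ) by
      rw [rpow_two]; ring, ← rpow_mul (by positivity), ← rpow_natCast]
    norm_num
  have e2 : t ^ 2 / (4 * -(t ^ 2 / (4 * v ^ 2))) = -v ^ 2 := by field_simp
  have e3 : exp (-v ^ 2 - (t * √n / 2) ^ 2 / v ^ 2) =
      exp (-v ^ 2) * exp (-(t ^ 2 / (4 * v ^ 2))) ^ n := by
    rw [← exp_nat_mul, ← exp_add]
    congr 1
    rw [div_pow, mul_pow, sq_sqrt hn]
    field_simp
    ring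
  rw [e1, e2, e3]
  field_simp

theorem isProbabilityMeasure_stableMeasure {t : ℝ} (ht : 0 < t) :
    IsProbabilityMeasure (stableMeasure t) := by
  constructor
  simpa using lintegral_pow_stableMeasure ht 0

theorem stableMeasure_prod_map_mul {t s : ℝ} (ht : 0 < t) (hs : 0 < s) :
    ((stableMeasure t).prod (stableMeasure s)).map (fun p => p.1 * p.2) =
      stableMeasure (t + s) := by
  have := isProbabilityMeasure_stableMeasure ht
  have := isProbabilityMeasure_stableMeasure hs
  have := isProbabilityMeasure_stableMeasure (add_pos ht hs)
  have hm : Measurable fun p : ℝ × ℝ => p.1 * p.2 := by fun_prop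
  have h1 : ∀ᵐ p ∂((stableMeasure t).prod (stableMeasure s)), p.1 ∈ Ioo (0 : ℝ) 1 :=
    Measure.quasiMeasurePreserving_fst.ae (ae_stableMeasure_mem t)
  have h2 : ∀ᵐ p ∂((stableMeasure t).prod (stableMeasure s)), p.2 ∈ Ioo (0 : ℝ) 1 :=
    Measure.quasiMeasurePreserving_snd.ae (ae_stableMeasure_mem s)
  refine measure_ext_of_moments ?_ ?_ fun n => ?_
  · refine (ae_map_iff (p := fun x => x ∈ Icc (0 : ℝ) 1) hm.aemeasurable measurableSet_Icc).2 ?_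
    filter_upwards [h1, h2] with p hp hq
    exact ⟨(mul_pos hp.1 hq.1).le, mul_le_one₀ hp.2.le hq.1.le hq.2.le⟩
  · exact (ae_stableMeasure_mem _).mono fun r hr => ⟨hr.1.le, hr.2.le⟩
  · rw [lintegral_map (by fun_prop) hm, lintegral_pow_stableMeasure (add_pos ht hs),
      lintegral_congr_ae (g := fun p => ENNReal.ofReal (p.1 ^ n) * ENNReal.ofReal (p.2 ^ n)),
      lintegral_prod_mul (f := fun r : ℝ => ENNReal.ofReal (r ^ n))
        (g := fun r : ℝ => ENNReal.ofReal (r ^ n)) (by fun_prop) (by fun_prop),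
      lintegral_pow_stableMeasure ht, lintegral_pow_stableMeasure hs,
      ← ENNReal.ofReal_mul (exp_pos _).le, ← exp_add]
    · congr 2; ring
    · filter_upwards [h1] with p hp
      rw [mul_pow, ENNReal.ofReal_mul (pow_nonneg hp.1.le n)]

theorem measurableSet_posOrthant (d : ℕ) : MeasurableSet (posOrthant d) :=
  MeasurableSet.univ_pi fun _ => measurableSet_Ioi

theorem mem_posOrthant {d : ℕ} {x : Fin d → ℝ} : x ∈ posOrthant d ↔ ∀ j, 0 < x j := by
  simp [posOrthant]

/-- The Laguerre heat kernel on the orthant. -/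
noncomputable def heatDensity {d : ℕ} (α : Fin d → ℝ) (r : ℝ) (x y : Fin d → ℝ) : ℝ≥0∞ :=
  ∏ j, laguerreDensity (α j) r (x j) (y j)

/-- The Laguerre heat kernel on the orthant, as a measure. -/
noncomputable def heatMeasure {d : ℕ} (α : Fin d → ℝ) (r : ℝ) (x : Fin d → ℝ) :
    Measure (Fin d → ℝ) :=
  (volume.restrict (posOrthant d)).withDensity (heatDensity α r x)

section

variable {d : ℕ} {α : Fin d → ℝ}

theorem measurable_heatDensity (α : Fin d → ℝ) :
    Measurable fun p : ℝ × (Fin d → ℝ) × (Fin d → ℝ) => heatDensity α p.1 p.2.1 p.2.2 := by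
  refine Finset.measurable_fun_prod _ fun j _ => ?_
  have h : Measurable fun p : ℝ × (Fin d → ℝ) × (Fin d → ℝ) => (p.1, p.2.1 j, p.2.2 j) := by
    fun_prop
  have hcomp := (measurable_laguerreDensity (α j)).comp h
  exact hcomp

theorem measurable_heatDensity_right (α : Fin d → ℝ) (r : ℝ) (x : Fin d → ℝ) :
    Measurable (heatDensity α r x) := by
  have h : Measurable fun y : Fin d → ℝ => (r, x, y) := by fun_prop
  have hcomp := (measurable_heatDensity α).comp h
  exact hcomp

theorem measurable_heatMeasure (α : Fin d → ℝ) :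
    Measurable fun p : ℝ × (Fin d → ℝ) => heatMeasure α p.1 p.2 := by
  refine Measure.measurable_of_measurable_coe _ fun s hs => ?_
  simp_rw [heatMeasure, withDensity_apply _ hs]
  refine Measurable.lintegral_prod_right' (f := fun q : (ℝ × (Fin d → ℝ)) × (Fin d → ℝ) =>
    heatDensity α q.1.1 q.1.2 q.2) ?_
  have h : Measurable fun q : (ℝ × (Fin d → ℝ)) × (Fin d → ℝ) => (q.1.1, q.1.2, q.2) := by fun_prop
  have hcomp := (measurable_heatDensity α).comp h
  exact hcomp

theorem measurable_heatMeasure_left (α : Fin d → ℝ) (x : Fin d → ℝ) :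
    Measurable fun r => heatMeasure α r x := by
  have h : Measurable fun r : ℝ => (r, x) := by fun_prop
  have hcomp := (measurable_heatMeasure α).comp h
  exact hcomp

theorem measurable_heatMeasure_right (α : Fin d → ℝ) (r : ℝ) : Measurable (heatMeasure α r) := by
  have h : Measurable fun x : Fin d → ℝ => (r, x) := by fun_prop
  have hcomp := (measurable_heatMeasure α).comp h
  exact hcomp

theorem ae_heatMeasure_mem (α : Fin d → ℝ) (r : ℝ) (x : Fin d → ℝ) :
    ∀ᵐ y ∂heatMeasure α r x, y ∈ posOrthant d :=
  (withDensity_absolutelyContinuous _ _).ae_le (ae_restrict_mem (measurableSet_posOrthant d))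

theorem heatMeasure_pi (α : Fin d → ℝ) (r : ℝ) (x : Fin d → ℝ) {s : Fin d → Set ℝ}
    (hs : ∀ j, MeasurableSet (s j)) :
    heatMeasure α r x (univ.pi s) = ∏ j, laguerreMeasure (α j) r (x j) (s j) := by
  rw [heatMeasure, withDensity_apply _ (MeasurableSet.univ_pi hs), posOrthant, volume_pi,
    Measure.restrict_pi_pi, Measure.restrict_pi_pi]
  unfold heatDensity
  rw [lintegral_fin_prod_eq_prod fun j => measurable_laguerreDensity_right (α j) r (x j)]
  exact Finset.prod_congr rfl fun j _ => by rw [laguerreMeasure, withDensity_apply _ (hs j)]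

theorem heatMeasure_eq_pi (hα : ∀ j, -1 < α j) {r : ℝ} (hr : r ∈ Ioo (0 : ℝ) 1) {x : Fin d → ℝ}
    (hx : x ∈ posOrthant d) :
    heatMeasure α r x = Measure.pi fun j => laguerreMeasure (α j) r (x j) := by
  have (j : Fin d) : IsProbabilityMeasure (laguerreMeasure (α j) r (x j)) :=
    isProbabilityMeasure_laguerreMeasure (hα j) hr (mem_posOrthant.1 hx j)
  exact (Measure.pi_eq fun s hs => heatMeasure_pi α r x hs).symm

theorem isProbabilityMeasure_heatMeasure (hα : ∀ j, -1 < α j) {r : ℝ} (hr : r ∈ Ioo (0 : ℝ) 1)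
    {x : Fin d → ℝ} (hx : x ∈ posOrthant d) : IsProbabilityMeasure (heatMeasure α r x) := by
  have (j : Fin d) : IsProbabilityMeasure (laguerreMeasure (α j) r (x j)) :=
    isProbabilityMeasure_laguerreMeasure (hα j) hr (mem_posOrthant.1 hx j)
  rw [heatMeasure_eq_pi hα hr hx]
  infer_instance

theorem heatMeasure_bind (hα : ∀ j, -1 < α j) {r r' : ℝ} (hr : r ∈ Ioo (0 : ℝ) 1)
    (hr' : r' ∈ Ioo (0 : ℝ) 1) {x : Fin d → ℝ} (hx : x ∈ posOrthant d) :
    (heatMeasure α r x).bind (heatMeasure α r') = heatMeasure α (r * r') x := by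
  have hrr : r * r' ∈ Ioo (0 : ℝ) 1 :=
    ⟨mul_pos hr.1 hr'.1, mul_lt_one_of_nonneg_of_lt_one_left hr.1.le hr.2 hr'.2.le⟩
  have (j : Fin d) : IsProbabilityMeasure (laguerreMeasure (α j) r (x j)) :=
    isProbabilityMeasure_laguerreMeasure (hα j) hr (mem_posOrthant.1 hx j)
  have (j : Fin d) : IsProbabilityMeasure (laguerreMeasure (α j) (r * r') (x j)) :=
    isProbabilityMeasure_laguerreMeasure (hα j) hrr (mem_posOrthant.1 hx j)
  rw [heatMeasure_eq_pi hα hrr hx]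
  refine (Measure.pi_eq fun s hs => ?_).symm
  have hpair : Measurable fun y : ℝ => (r', y) := by fun_prop
  have hm (j : Fin d) : Measurable (laguerreMeasure (α j) r') := by
    have hcomp := (measurable_laguerreMeasure (α j)).comp hpair
    exact hcomp
  have hm2 (j : Fin d) : Measurable fun y => laguerreMeasure (α j) r' y (s j) :=
    (Measure.measurable_coe (hs j)).comp (hm j)
  rw [Measure.bind_apply (MeasurableSet.univ_pi hs)
    (measurable_heatMeasure_right α r').aemeasurable]
  simp_rw [heatMeasure_pi α r' _ hs]
  rw [heatMeasure_eq_pi hα hr hx, lintegral_fin_prod_eq_prod hm2]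
  refine Finset.prod_congr rfl fun j _ => ?_
  rw [← laguerreMeasure_bind (hα j) hr hr' (mem_posOrthant.1 hx j),
    Measure.bind_apply (hs j) (hm j).aemeasurable]

/-- The Poisson–Laguerre kernel as a measure, obtained by subordination of the heat kernel. -/
noncomputable def poissonMeasure (α : Fin d → ℝ) (t : ℝ) (x : Fin d → ℝ) : Measure (Fin d → ℝ) :=
  (stableMeasure t).bind fun r => heatMeasure α r x

instance sFinite_stableMeasure (t : ℝ) : SFinite (stableMeasure t) := by
  unfold stableMeasure
  infer_instance

theorem measurable_poissonMeasure (α : Fin d → ℝ) (t : ℝ) : Measurable (poissonMeasure α t) := by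
  refine Measure.measurable_of_measurable_coe _ fun s hs => ?_
  simp_rw [poissonMeasure, Measure.bind_apply hs (measurable_heatMeasure_left α _).aemeasurable]
  refine Measurable.lintegral_prod_right' (f := fun q : (Fin d → ℝ) × ℝ =>
    heatMeasure α q.2 q.1 s) ?_
  have h : Measurable fun q : (Fin d → ℝ) × ℝ => (q.2, q.1) := by fun_prop
  have hcomp := (Measure.measurable_coe hs).comp ((measurable_heatMeasure α).comp h)
  exact hcomp

theorem isProbabilityMeasure_poissonMeasure (hα : ∀ j, -1 < α j) {t : ℝ} (ht : 0 < t)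
    {x : Fin d → ℝ} (hx : x ∈ posOrthant d) : IsProbabilityMeasure (poissonMeasure α t x) := by
  have := isProbabilityMeasure_stableMeasure ht
  constructor
  rw [poissonMeasure, Measure.bind_apply .univ (measurable_heatMeasure_left α x).aemeasurable,
    lintegral_congr_ae (g := fun _ => 1), lintegral_one, measure_univ]
  filter_upwards [ae_stableMeasure_mem t] with r hr
  have := isProbabilityMeasure_heatMeasure hα hr hx
  exact measure_univ

theorem ae_poissonMeasure_mem (α : Fin d → ℝ) (t : ℝ) (x : Fin d → ℝ) :
    ∀ᵐ y ∂poissonMeasure α t x, y ∈ posOrthant d := by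
  have hset : MeasurableSet {y | y ∉ posOrthant d} := (measurableSet_posOrthant d).compl
  rw [ae_iff, poissonMeasure, Measure.bind_apply hset
    (measurable_heatMeasure_left α x).aemeasurable, lintegral_congr (g := fun _ => 0),
    lintegral_zero]
  exact fun r => ae_heatMeasure_mem α r x

theorem poissonMeasure_bind (hα : ∀ j, -1 < α j) {t s : ℝ} (ht : 0 < t) (hs : 0 < s)
    {x : Fin d → ℝ} (hx : x ∈ posOrthant d) :
    (poissonMeasure α t x).bind (poissonMeasure α s) = poissonMeasure α (t + s) x := by
  ext B hB
  have hmH : Measurable fun q : ℝ × (Fin d → ℝ) => heatMeasure α q.1 q.2 B := by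
    have hcomp := (Measure.measurable_coe hB).comp (measurable_heatMeasure α)
    exact hcomp
  have hmP : Measurable fun y => poissonMeasure α s y B := by
    have hcomp := (Measure.measurable_coe hB).comp (measurable_poissonMeasure α s)
    exact hcomp
  have hmHx : Measurable fun r => heatMeasure α r x B := by
    have hcomp := (Measure.measurable_coe hB).comp (measurable_heatMeasure_left α x)
    exact hcomp
  have hmul : Measurable fun p : ℝ × ℝ => p.1 * p.2 := by fun_prop
  have hmHmul : Measurable fun p : ℝ × ℝ => heatMeasure α (p.1 * p.2) x B := by
    have hcomp := hmHx.comp hmul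
    exact hcomp
  rw [Measure.bind_apply hB (measurable_poissonMeasure α s).aemeasurable,
    poissonMeasure, Measure.lintegral_bind (measurable_heatMeasure_left α x).aemeasurable
      hmP.aemeasurable, poissonMeasure, Measure.bind_apply hB
      (measurable_heatMeasure_left α x).aemeasurable, ← stableMeasure_prod_map_mul ht hs,
    lintegral_map hmHx hmul, lintegral_prod _ hmHmul.aemeasurable]
  refine lintegral_congr_ae ?_
  filter_upwards [ae_stableMeasure_mem t] with r hr
  have := isProbabilityMeasure_heatMeasure hα hr hx
  simp_rw [poissonMeasure, Measure.bind_apply hB (measurable_heatMeasure_left α _).aemeasurable]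
  rw [lintegral_lintegral_swap]
  · refine lintegral_congr_ae ?_
    filter_upwards [ae_stableMeasure_mem s] with r' hr'
    rw [← heatMeasure_bind hα hr hr' hx, Measure.bind_apply hB
      (measurable_heatMeasure_right α r').aemeasurable]
  · have h : Measurable fun q : (Fin d → ℝ) × ℝ => (q.2, q.1) := by fun_prop
    have hcomp := hmH.comp h
    exact hcomp.aemeasurable

/-- The density of `poissonMeasure` with respect to Lebesgue measure on the orthant. -/
noncomputable def poissonDensity (α : Fin d → ℝ) (t : ℝ) (x y : Fin d → ℝ) : ℝ≥0∞ :=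
  ∫⁻ r in Ioo (0 : ℝ) 1, ENNReal.ofReal (stableDensity t r) * heatDensity α r x y

theorem measurable_stable_mul_heatDensity (α : Fin d → ℝ) (t : ℝ) (x : Fin d → ℝ) :
    Measurable fun q : (Fin d → ℝ) × ℝ =>
      ENNReal.ofReal (stableDensity t q.2) * heatDensity α q.2 x q.1 := by
  have h : Measurable fun q : (Fin d → ℝ) × ℝ => (q.2, x, q.1) := by fun_prop
  have hcomp := (measurable_heatDensity α).comp h
  exact ((measurable_stableDensity_right t).comp measurable_snd).ennreal_ofReal.mul hcomp

theorem measurable_poissonDensity (α : Fin d → ℝ) (t : ℝ) (x : Fin d → ℝ) :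
    Measurable (poissonDensity α t x) :=
  (measurable_stable_mul_heatDensity α t x).lintegral_prod_right'

theorem poissonMeasure_eq_withDensity (α : Fin d → ℝ) (t : ℝ) (x : Fin d → ℝ) :
    poissonMeasure α t x =
      (volume.restrict (posOrthant d)).withDensity (poissonDensity α t x) := by
  ext B hB
  have hmHx : Measurable fun r => heatMeasure α r x B := by
    have hcomp := (Measure.measurable_coe hB).comp (measurable_heatMeasure_left α x)
    exact hcomp
  rw [poissonMeasure, Measure.bind_apply hB (measurable_heatMeasure_left α x).aemeasurable,
    withDensity_apply _ hB, stableMeasure, lintegral_withDensity_eq_lintegral_mul _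
      (measurable_stableDensity_right t).ennreal_ofReal hmHx]
  unfold poissonDensity
  rw [lintegral_lintegral_swap (measurable_stable_mul_heatDensity α t x).aemeasurable]
  refine lintegral_congr fun r => ?_
  rw [Pi.mul_apply, heatMeasure, withDensity_apply _ hB,
    lintegral_const_mul _ (measurable_heatDensity_right α r x)]

theorem ae_poissonDensity_lt_top (hα : ∀ j, -1 < α j) {t : ℝ} (ht : 0 < t)
    {x : Fin d → ℝ} (hx : x ∈ posOrthant d) :
    ∀ᵐ y ∂volume.restrict (posOrthant d), poissonDensity α t x y < ∞ := by
  have := isProbabilityMeasure_poissonMeasure hα ht hx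
  refine ae_lt_top (measurable_poissonDensity α t x) ?_
  have h := measure_ne_top (poissonMeasure α t x) univ
  rwa [poissonMeasure_eq_withDensity, withDensity_apply _ .univ, Measure.restrict_univ] at h

theorem plKernel_eq_toReal (hα : ∀ j, -1 < α j) {t : ℝ} (ht : 0 < t)
    {x y : Fin d → ℝ} (hx : x ∈ posOrthant d) (hy : y ∈ posOrthant d)
    (hfin : poissonDensity α t x y < ∞) :
    plKernel d α t x y = (poissonDensity α t x y).toReal := by
  have hm : Measurable fun r => ENNReal.ofReal (stableDensity t r) * heatDensity α r x y := by
    have h : Measurable fun r : ℝ => (y, r) := by fun_prop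
    have hcomp := (measurable_stable_mul_heatDensity α t x).comp h
    exact hcomp
  rw [plKernel, poissonDensity, ← integral_toReal hm.aemeasurable (ae_lt_top hm hfin.ne),
    ← integral_const_mul]
  refine setIntegral_congr_fun measurableSet_Ioo fun r hr => ?_
  have h1 : 1 - r ≠ 0 := by linarith [hr.2]
  have h0 : r ≠ 0 := hr.1.ne'
  simp only [ENNReal.toReal_mul, ENNReal.toReal_ofReal (stableDensity_nonneg ht.le hr),
    heatDensity, ENNReal.toReal_prod]
  simp_rw [fun j => toReal_laguerreDensity (hα j) hr (mem_posOrthant.1 hx j)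
    (mem_posOrthant.1 hy j)]
  rw [Finset.prod_mul_distrib (f := fun _ => 1 / (1 - r)), Finset.prod_const, Finset.card_univ,
    Fintype.card_fin, one_div_pow]
  unfold stableDensity
  simp only [div_eq_mul_inv, mul_inv]
  ring

theorem plP_eq_integral (hα : ∀ j, -1 < α j) {t : ℝ} (ht : 0 < t)
    {x : Fin d → ℝ} (hx : x ∈ posOrthant d) (f : (Fin d → ℝ) → ℝ) :
    plP d α t f x = ∫ y, f y ∂poissonMeasure α t x := by
  rw [plP, if_neg ht.ne', poissonMeasure_eq_withDensity,
    integral_withDensity_eq_integral_toReal_smul (measurable_poissonDensity α t x)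
      (ae_poissonDensity_lt_top hα ht hx)]
  refine integral_congr_ae ?_
  filter_upwards [ae_poissonDensity_lt_top hα ht hx, ae_restrict_mem (measurableSet_posOrthant d)]
    with y hy hy'
  rw [plKernel_eq_toReal hα ht hx hy' hy, smul_eq_mul]

end

/-- The polynomial factors of the time derivatives of `stableDensity`. -/
noncomputable def stablePoly : ℕ → Polynomial ℝ
  | 0 => 1
  | k + 1 => Polynomial.C (1 - (k : ℝ)) * stablePoly k +
      Polynomial.C 2 * Polynomial.X * (stablePoly k).derivative -
      Polynomial.C (1 / 2) * Polynomial.X * stablePoly k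

/-- The `k`-th time derivative of `stableDensity`. -/
noncomputable def stableDeriv (k : ℕ) (t r : ℝ) : ℝ :=
  t⁻¹ ^ k * (stablePoly k).eval (t ^ 2 / (-log r)) * stableDensity t r

theorem stableDeriv_zero (t r : ℝ) : stableDeriv 0 t r = stableDensity t r := by
  simp [stableDeriv, stablePoly]

theorem measurable_stableDeriv (k : ℕ) : Measurable fun p : ℝ × ℝ => stableDeriv k p.1 p.2 := by
  have h : Measurable fun p : ℝ × ℝ => (stablePoly k).eval (p.1 ^ 2 / (-log p.2)) :=
    (stablePoly k).continuous.measurable.comp (by fun_prop)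
  have h1 : Measurable fun p : ℝ × ℝ => p.1⁻¹ ^ k := by fun_prop
  exact (h1.mul h).mul measurable_stableDensity

theorem hasDerivAt_stableDensity {t : ℝ} (ht : 0 < t) (r : ℝ) :
    HasDerivAt (fun s => stableDensity s r)
      (t⁻¹ * (1 - t ^ 2 / (-log r) / 2) * stableDensity t r) t := by
  have h1 : HasDerivAt (fun s : ℝ => s ^ 2 / (4 * log r)) (2 * t / (4 * log r)) t := by
    simpa using (hasDerivAt_pow 2 t).div_const (4 * log r)
  refine (((hasDerivAt_id t).mul h1.exp).div_const
    (2 * √π * (-log r) ^ ((3 : ℝ) / 2) * r)).congr_deriv ?_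
  unfold stableDensity
  simp only [id, div_eq_mul_inv, mul_inv, inv_neg]
  field_simp
  ring

theorem hasDerivAt_stableDeriv (k : ℕ) {t : ℝ} (ht : 0 < t) (r : ℝ) :
    HasDerivAt (fun s => stableDeriv k s r) (stableDeriv (k + 1) t r) t := by
  have h1 : HasDerivAt (fun s : ℝ => s⁻¹ ^ k) (-(k : ℝ) * t⁻¹ ^ k * t⁻¹) t := by
    refine ((hasDerivAt_inv ht.ne').pow k).congr_deriv ?_
    rcases k with _ | k
    · simp
    · simp only [Nat.add_sub_cancel, pow_succ]
      field_simp
  have h2 : HasDerivAt (fun s : ℝ => s ^ 2 / (-log r)) (2 * (t⁻¹ * t ^ 2) / (-log r)) t := by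
    rw [show t⁻¹ * t ^ 2 = t by field_simp]
    simpa using (hasDerivAt_pow 2 t).div_const (-log r)
  have h3 := ((stablePoly k).hasDerivAt (t ^ 2 / (-log r))).comp t h2
  refine ((h1.mul h3).mul (hasDerivAt_stableDensity ht r)).congr_deriv ?_
  simp only [stableDeriv, stablePoly, Polynomial.eval_sub, Polynomial.eval_add,
    Polynomial.eval_mul, Polynomial.eval_C, Polynomial.eval_X, Function.comp, Pi.mul_apply,
    div_eq_mul_inv]
  ring

theorem exists_abs_eval_mul_exp_le (p : Polynomial ℝ) {c : ℝ} (hc : 0 < c) :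
    ∃ C > 0, ∀ w ≥ 0, |p.eval w| * exp (-(c * w)) ≤ C := by
  induction p using Polynomial.induction_on' with
  | add p q hp hq =>
    obtain ⟨C, hC, h⟩ := hp
    obtain ⟨D, hD, h'⟩ := hq
    refine ⟨C + D, by positivity, fun w hw => ?_⟩
    have := abs_add_le (p.eval w) (q.eval w)
    rw [Polynomial.eval_add]
    nlinarith [h w hw, h' w hw, exp_pos (-(c * w))]
  | monomial n a =>
    refine ⟨|a| * (n.factorial / c ^ n) + 1, by positivity, fun w hw => ?_⟩
    have hexp := pow_div_factorial_le_exp (c * w) (by positivity) n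
    have h1 : w ^ n * exp (-(c * w)) ≤ n.factorial / c ^ n := by
      rw [exp_neg, ← div_eq_mul_inv, div_le_div_iff₀ (exp_pos _) (by positivity)]
      rw [div_le_iff₀ (by positivity), mul_pow] at hexp
      linarith
    rw [Polynomial.eval_monomial, abs_mul, abs_of_nonneg (pow_nonneg hw n), mul_assoc]
    linarith [mul_le_mul_of_nonneg_left h1 (abs_nonneg a)]

theorem exists_abs_stableDeriv_le (k : ℕ) :
    ∃ C > 0, ∀ t > 0, ∀ r ∈ Ioo (0 : ℝ) 1,
      |stableDeriv k t r| ≤ C * t⁻¹ ^ k * stableDensity (t / 2) r := by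
  obtain ⟨C, hC, h⟩ := exists_abs_eval_mul_exp_le (stablePoly k) (c := 3 / 16) (by norm_num)
  refine ⟨2 * C, by positivity, fun t ht r hr => ?_⟩
  have hu : 0 < -log r := by linarith [log_neg hr.1 hr.2]
  have hd := stableDensity_nonneg (half_pos ht).le hr
  have heq : stableDensity t r =
      2 * exp (-(3 / 16 * (t ^ 2 / (-log r)))) * stableDensity (t / 2) r := by
    have : exp (t ^ 2 / (4 * log r)) =
        exp (-(3 / 16 * (t ^ 2 / (-log r)))) * exp ((t / 2) ^ 2 / (4 * log r)) := by
      rw [← exp_add]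
      congr 1
      have : log r ≠ 0 := by linarith
      field_simp
      ring
    rw [stableDensity, stableDensity, this]
    ring
  rw [stableDeriv, abs_mul, abs_mul, abs_of_nonneg (stableDensity_nonneg ht.le hr),
    abs_of_nonneg (by positivity : 0 ≤ t⁻¹ ^ k), heq]
  have hb := h (t ^ 2 / (-log r)) (by positivity)
  calc _ = 2 * (|(stablePoly k).eval (t ^ 2 / (-log r))| *
        exp (-(3 / 16 * (t ^ 2 / (-log r))))) * t⁻¹ ^ k * stableDensity (t / 2) r := by ring
    _ ≤ _ := by gcongr

theorem stableDensity_le_mul {a b c r : ℝ} (ha : 0 < a) (hab : a ≤ b) (hbc : b ≤ c * a)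
    (hr : r ∈ Ioo (0 : ℝ) 1) : stableDensity b r ≤ c * stableDensity a r := by
  have hu : 0 < -log r := by linarith [log_neg hr.1 hr.2]
  have h0 := hr.1
  have hexp : exp (b ^ 2 / (4 * log r)) ≤ exp (a ^ 2 / (4 * log r)) := by
    refine exp_le_exp.2 (div_le_div_of_nonpos_of_le (by linarith) ?_)
    gcongr
  rw [stableDensity, stableDensity, ← mul_div_assoc, ← mul_assoc]
  have hca : 0 ≤ c * a := (ha.le.trans hab).trans hbc
  gcongr

theorem integrableOn_stableDensity {t : ℝ} (ht : 0 < t) :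
    IntegrableOn (stableDensity t) (Ioo 0 1) := by
  have := isProbabilityMeasure_stableMeasure ht
  refine ⟨(measurable_stableDensity_right t).aestronglyMeasurable, ?_⟩
  rw [hasFiniteIntegral_iff_ofReal]
  · have h := measure_lt_top (stableMeasure t) univ
    rwa [stableMeasure, withDensity_apply _ .univ, Measure.restrict_univ] at h
  · exact ae_restrict_of_forall_mem measurableSet_Ioo fun r hr => stableDensity_nonneg ht.le hr

theorem integral_stableDensity {t : ℝ} (ht : 0 < t) :
    ∫ r in Ioo 0 1, stableDensity t r = 1 := by
  have := isProbabilityMeasure_stableMeasure ht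
  rw [integral_eq_lintegral_of_nonneg_ae
    (ae_restrict_of_forall_mem measurableSet_Ioo fun r hr => stableDensity_nonneg ht.le hr)
    (measurable_stableDensity_right t).aestronglyMeasurable]
  have h := measure_univ (μ := stableMeasure t)
  rw [stableMeasure, withDensity_apply _ .univ, Measure.restrict_univ] at h
  rw [h, ENNReal.toReal_one]

section

variable {d : ℕ} {α : Fin d → ℝ}

/-- The heat average of `f` at parameter `r`. -/
noncomputable def heatIntegral (α : Fin d → ℝ) (f : (Fin d → ℝ) → ℝ) (r : ℝ) (x : Fin d → ℝ) : ℝ :=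
  ∫ y, f y ∂heatMeasure α r x

/-- The `k`-th time derivative of the Poisson–Laguerre semigroup applied to `f`. -/
noncomputable def poissonDeriv (α : Fin d → ℝ) (f : (Fin d → ℝ) → ℝ) (k : ℕ) (t : ℝ)
    (x : Fin d → ℝ) : ℝ :=
  ∫ r in Ioo (0 : ℝ) 1, stableDeriv k t r * heatIntegral α f r x

theorem measurable_heatIntegral (α : Fin d → ℝ) {f : (Fin d → ℝ) → ℝ} (hf : Measurable f) :
    Measurable fun p : ℝ × (Fin d → ℝ) => heatIntegral α f p.1 p.2 := by
  let κ : ProbabilityTheory.Kernel (ℝ × (Fin d → ℝ)) (Fin d → ℝ) := ⟨_, measurable_heatMeasure α⟩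
  have h := hf.stronglyMeasurable.integral_kernel (κ := κ)
  exact h.measurable

theorem measurable_poissonDeriv (α : Fin d → ℝ) {f : (Fin d → ℝ) → ℝ} (hf : Measurable f) (k : ℕ) :
    Measurable fun p : ℝ × (Fin d → ℝ) => poissonDeriv α f k p.1 p.2 := by
  have h1 : Measurable fun q : (ℝ × (Fin d → ℝ)) × ℝ => (q.1.1, q.2) := by fun_prop
  have h2 : Measurable fun q : (ℝ × (Fin d → ℝ)) × ℝ => (q.2, q.1.2) := by fun_prop
  have h3 := (measurable_stableDeriv k).comp h1
  have h4 := (measurable_heatIntegral α hf).comp h2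
  have h5 := (h3.mul h4).stronglyMeasurable.integral_prod_right' (ν := volume.restrict (Ioo 0 1))
  exact h5.measurable

theorem measurable_poissonDeriv_right (α : Fin d → ℝ) {f : (Fin d → ℝ) → ℝ} (hf : Measurable f)
    (k : ℕ) (t : ℝ) : Measurable (poissonDeriv α f k t) := by
  have h : Measurable fun x : Fin d → ℝ => (t, x) := by fun_prop
  have hcomp := (measurable_poissonDeriv α hf k).comp h
  exact hcomp

theorem measurable_poissonDeriv_left (α : Fin d → ℝ) {f : (Fin d → ℝ) → ℝ} (hf : Measurable f)
    (k : ℕ) (x : Fin d → ℝ) : Measurable fun t => poissonDeriv α f k t x := by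
  have h : Measurable fun t : ℝ => (t, x) := by fun_prop
  have hcomp := (measurable_poissonDeriv α hf k).comp h
  exact hcomp

theorem abs_heatIntegral_le (hα : ∀ j, -1 < α j) {f : (Fin d → ℝ) → ℝ} {M : ℝ}
    (hM : ∀ y ∈ posOrthant d, |f y| ≤ M) {r : ℝ} (hr : r ∈ Ioo (0 : ℝ) 1) {x : Fin d → ℝ}
    (hx : x ∈ posOrthant d) : |heatIntegral α f r x| ≤ M := by
  have := isProbabilityMeasure_heatMeasure hα hr hx
  have h := norm_integral_le_of_norm_le_const (μ := heatMeasure α r x) (f := f) (C := M)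
    ((ae_heatMeasure_mem α r x).mono fun y hy => hM y hy)
  simpa [heatIntegral] using h

theorem abs_integral_poissonMeasure_le (hα : ∀ j, -1 < α j) {f : (Fin d → ℝ) → ℝ} {M : ℝ}
    (hM : ∀ y ∈ posOrthant d, |f y| ≤ M) {t : ℝ} (ht : 0 < t) {x : Fin d → ℝ}
    (hx : x ∈ posOrthant d) : |∫ y, f y ∂poissonMeasure α t x| ≤ M := by
  have := isProbabilityMeasure_poissonMeasure hα ht hx
  have h := norm_integral_le_of_norm_le_const (μ := poissonMeasure α t x) (f := f) (C := M)
    ((ae_poissonMeasure_mem α t x).mono fun y hy => hM y hy)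
  simpa using h

theorem integrable_poissonMeasure (hα : ∀ j, -1 < α j) {f : (Fin d → ℝ) → ℝ} {M : ℝ}
    (hf : Measurable f) (hM : ∀ y ∈ posOrthant d, |f y| ≤ M) {t : ℝ} (ht : 0 < t)
    {x : Fin d → ℝ} (hx : x ∈ posOrthant d) : Integrable f (poissonMeasure α t x) := by
  have := isProbabilityMeasure_poissonMeasure hα ht hx
  exact Integrable.of_bound hf.aestronglyMeasurable M
    ((ae_poissonMeasure_mem α t x).mono fun y hy => hM y hy)

theorem poissonDeriv_zero (hα : ∀ j, -1 < α j) {f : (Fin d → ℝ) → ℝ} {M : ℝ}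
    (hf : Measurable f) (hM : ∀ y ∈ posOrthant d, |f y| ≤ M) {t : ℝ} (ht : 0 < t)
    {x : Fin d → ℝ} (hx : x ∈ posOrthant d) :
    poissonDeriv α f 0 t x = ∫ y, f y ∂poissonMeasure α t x := by
  rw [poissonMeasure, integral_bind_of_integrable (measurable_heatMeasure_left α x)
    (integrable_poissonMeasure hα hf hM ht hx), stableMeasure,
    integral_withDensity_eq_integral_toReal_smul
      (measurable_stableDensity_right t).ennreal_ofReal (by simp)]
  refine setIntegral_congr_fun measurableSet_Ioo fun r hr => ?_
  simp only [stableDeriv_zero, ENNReal.toReal_ofReal (stableDensity_nonneg ht.le hr), smul_eq_mul,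
    heatIntegral]

theorem hasDerivAt_poissonDeriv (hα : ∀ j, -1 < α j) {f : (Fin d → ℝ) → ℝ} {M : ℝ}
    (hf : Measurable f) (hM : ∀ y ∈ posOrthant d, |f y| ≤ M) {x : Fin d → ℝ}
    (hx : x ∈ posOrthant d) (k : ℕ) {t : ℝ} (ht : 0 < t) :
    HasDerivAt (fun s => poissonDeriv α f k s x) (poissonDeriv α f (k + 1) t x) t := by
  have hM0 : 0 ≤ M := (abs_nonneg _).trans (hM x hx)
  refine hasDerivAt_integral_family (w := fun k s r => stableDeriv k s r * heatIntegral α f r x)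
    ?_ ?_ ?_ k ht
  · intro k t _
    have h1 : Measurable fun r : ℝ => (t, r) := by fun_prop
    have h2 : Measurable fun r : ℝ => (r, x) := by fun_prop
    have h3 := (measurable_stableDeriv k).comp h1
    have h4 := (measurable_heatIntegral α hf).comp h2
    exact (h3.mul h4).aestronglyMeasurable
  · exact ae_of_all _ fun r k t ht => (hasDerivAt_stableDeriv k ht r).mul_const _
  · intro k t ht
    obtain ⟨C, hC, h⟩ := exists_abs_stableDeriv_le k
    refine ⟨fun r => C * (t / 2)⁻¹ ^ k * M * 4 * stableDensity (t / 4) r,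
      (integrableOn_stableDensity (by positivity)).const_mul _, ?_⟩
    refine ae_restrict_of_forall_mem measurableSet_Ioo fun r hr s hs => ?_
    have hs0 : 0 < s := by linarith [hs.1]
    have hd := stableDensity_nonneg (half_pos hs0).le hr
    have h1 : stableDensity (s / 2) r ≤ 4 * stableDensity (t / 4) r :=
      stableDensity_le_mul (by positivity) (by linarith [hs.1]) (by linarith [hs.2]) hr
    have h2 : s⁻¹ ^ k ≤ (t / 2)⁻¹ ^ k := by
      gcongr
      exact hs.1.le
    rw [abs_mul]
    calc |stableDeriv k s r| * |heatIntegral α f r x|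
        ≤ (C * s⁻¹ ^ k * stableDensity (s / 2) r) * M := by
          gcongr
          exacts [h s hs0 r hr, abs_heatIntegral_le hα hM hr hx]
      _ ≤ (C * (t / 2)⁻¹ ^ k * (4 * stableDensity (t / 4) r)) * M := by gcongr
      _ = _ := by ring

theorem exists_abs_poissonDeriv_le (k : ℕ) :
    ∃ C > 0, ∀ {d : ℕ} {α : Fin d → ℝ} (_ : ∀ j, -1 < α j) {f : (Fin d → ℝ) → ℝ} {M : ℝ}
      (_ : ∀ y ∈ posOrthant d, |f y| ≤ M) {t : ℝ} (_ : 0 < t) {x : Fin d → ℝ}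
      (_ : x ∈ posOrthant d), |poissonDeriv α f k t x| ≤ C * t⁻¹ ^ k * M := by
  obtain ⟨C, hC, h⟩ := exists_abs_stableDeriv_le k
  refine ⟨C, hC, fun {d α} hα {f M} hM {t} ht {x} hx => ?_⟩
  have hb : ∀ᵐ r ∂volume.restrict (Ioo (0 : ℝ) 1), ‖stableDeriv k t r * heatIntegral α f r x‖ ≤
      C * t⁻¹ ^ k * M * stableDensity (t / 2) r := by
    refine ae_restrict_of_forall_mem measurableSet_Ioo fun r hr => ?_
    have hd := stableDensity_nonneg (half_pos ht).le hr
    rw [norm_mul, norm_eq_abs, norm_eq_abs]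
    calc |stableDeriv k t r| * |heatIntegral α f r x|
        ≤ (C * t⁻¹ ^ k * stableDensity (t / 2) r) * M := by
          gcongr
          exacts [h t ht r hr, abs_heatIntegral_le hα hM hr hx]
      _ = _ := by ring
  have := norm_integral_le_of_norm_le
    ((integrableOn_stableDensity (half_pos ht)).const_mul (C * t⁻¹ ^ k * M)) hb
  rwa [integral_const_mul, integral_stableDensity (half_pos ht), mul_one] at this

theorem poissonDeriv_add_eq_integral (hα : ∀ j, -1 < α j) {f : (Fin d → ℝ) → ℝ} {M : ℝ}
    (hf : Measurable f) (hM : ∀ y ∈ posOrthant d, |f y| ≤ M) {x : Fin d → ℝ}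
    (hx : x ∈ posOrthant d) (k : ℕ) {a b : ℝ} (ha : 0 < a) (hb : 0 < b) :
    poissonDeriv α f k (a + b) x = ∫ y, poissonDeriv α f k b y ∂poissonMeasure α a x := by
  have hM0 : 0 ≤ M := (abs_nonneg _).trans (hM x hx)
  have := isProbabilityMeasure_poissonMeasure hα ha hx
  have h1 (k : ℕ) (t : ℝ) (ht : t > 0) : HasDerivAt (fun s => poissonDeriv α f k (a + s) x)
      (poissonDeriv α f (k + 1) (a + t) x) t :=
    (hasDerivAt_poissonDeriv hα hf hM hx k (add_pos ha ht)).comp_const_add a t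
  have h2 (k : ℕ) (t : ℝ) (ht : t > 0) :
      HasDerivAt (fun s => ∫ y, poissonDeriv α f k s y ∂poissonMeasure α a x)
        (∫ y, poissonDeriv α f (k + 1) t y ∂poissonMeasure α a x) t := by
    refine hasDerivAt_integral_family
      (fun k t _ => (measurable_poissonDeriv_right α hf k t).aestronglyMeasurable) ?_ ?_ k ht
    · filter_upwards [ae_poissonMeasure_mem α a x] with y hy k t ht
      exact hasDerivAt_poissonDeriv hα hf hM hy k ht
    · intro k t ht
      obtain ⟨C, hC, h⟩ := exists_abs_poissonDeriv_le k
      refine ⟨fun _ => C * (t / 2)⁻¹ ^ k * M, integrable_const _, ?_⟩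
      filter_upwards [ae_poissonMeasure_mem α a x] with y hy s hs
      have hs0 : 0 < s := by linarith [hs.1]
      refine (h hα hM hs0 hy).trans ?_
      gcongr
      exact hs.1.le
  refine (iteratedDeriv_eq_of_hasDerivAt_family (u := fun s => poissonDeriv α f 0 (a + s) x)
    (w := fun k s => poissonDeriv α f k (a + s) x) (fun _ _ => rfl) h1 k b hb).symm.trans
    (iteratedDeriv_eq_of_hasDerivAt_family
      (w := fun k s => ∫ y, poissonDeriv α f k s y ∂poissonMeasure α a x) ?_ h2 k b hb)
  intro t ht
  have hint := integrable_poissonMeasure hα hf hM (add_pos ha ht) hx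
  rw [← poissonMeasure_bind hα ha ht hx] at hint
  rw [poissonDeriv_zero hα hf hM (add_pos ha ht) hx, ← poissonMeasure_bind hα ha ht hx,
    integral_bind_of_integrable (measurable_poissonMeasure α t) hint]
  refine integral_congr_ae ?_
  filter_upwards [ae_poissonMeasure_mem α a x] with y hy
  exact (poissonDeriv_zero hα hf hM ht hy).symm

theorem poissonDeriv_add_eq_poissonDeriv (hα : ∀ j, -1 < α j) {f : (Fin d → ℝ) → ℝ} {M : ℝ}
    (hf : Measurable f) (hM : ∀ y ∈ posOrthant d, |f y| ≤ M) {x : Fin d → ℝ}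
    (hx : x ∈ posOrthant d) (n k : ℕ) {a b : ℝ} (ha : 0 < a) (hb : 0 < b) :
    poissonDeriv α f (n + k) (a + b) x = poissonDeriv α (poissonDeriv α f n b) k a x := by
  obtain ⟨C, hC, h⟩ := exists_abs_poissonDeriv_le n
  have hg := measurable_poissonDeriv_right α hf n b
  have hgM (y : Fin d → ℝ) (hy : y ∈ posOrthant d) : |poissonDeriv α f n b y| ≤
      C * b⁻¹ ^ n * M := h hα hM hb hy
  have h1 (k : ℕ) (t : ℝ) (ht : t > 0) : HasDerivAt (fun s => poissonDeriv α f (n + k) (s + b) x)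
      (poissonDeriv α f (n + (k + 1)) (t + b) x) t :=
    (hasDerivAt_poissonDeriv hα hf hM hx (n + k) (add_pos ht hb)).comp_add_const t b
  refine (iteratedDeriv_eq_of_hasDerivAt_family (u := fun s => poissonDeriv α f n (s + b) x)
    (w := fun k s => poissonDeriv α f (n + k) (s + b) x) (fun _ _ => rfl) h1 k a ha).symm.trans
    (iteratedDeriv_eq_of_hasDerivAt_family
      (w := fun k s => poissonDeriv α (poissonDeriv α f n b) k s x) ?_
      (fun k t ht => hasDerivAt_poissonDeriv hα hg hgM hx k ht) k a ha)
  intro t ht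
  rw [poissonDeriv_zero hα hg hgM ht hx, poissonDeriv_add_eq_integral hα hf hM hx n ht hb]

theorem iteratedDeriv_plP (hα : ∀ j, -1 < α j) {f : (Fin d → ℝ) → ℝ} {M : ℝ}
    (hf : Measurable f) (hM : ∀ y ∈ posOrthant d, |f y| ≤ M) {x : Fin d → ℝ}
    (hx : x ∈ posOrthant d) (k : ℕ) {t : ℝ} (ht : 0 < t) :
    iteratedDeriv k (fun u => plP d α u f x) t = poissonDeriv α f k t x := by
  refine iteratedDeriv_eq_of_hasDerivAt_family (w := fun k s => poissonDeriv α f k s x) ?_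
    (fun k t ht => hasDerivAt_poissonDeriv hα hf hM hx k ht) k t ht
  intro t ht
  rw [plP_eq_integral hα ht hx, poissonDeriv_zero hα hf hM ht hx]

end

theorem integrableOn_rpow_mul_add_rpow_and_integral_le {a γ t : ℝ} (ha : 0 < a) (hγ : a + γ < 0)
    (ht : 0 < t) :
    IntegrableOn (fun s => s ^ (a - 1) * (t + s) ^ γ) (Ioi 0) ∧
      ∫ s in Ioi 0, s ^ (a - 1) * (t + s) ^ γ ≤ (1 / a - 1 / (a + γ)) * t ^ (a + γ) := by
  have hm : Measurable fun s : ℝ => s ^ (a - 1) * (t + s) ^ γ := by fun_prop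
  have hγ0 : γ ≤ 0 := by linarith
  have hint1 : IntegrableOn (fun s : ℝ => s ^ (a - 1)) (Ioc 0 t) :=
    (intervalIntegrable_iff_integrableOn_Ioc_of_le ht.le).1
      (intervalIntegral.intervalIntegrable_rpow' (by linarith))
  have hint2 : IntegrableOn (fun s : ℝ => s ^ (a - 1 + γ)) (Ioi t) :=
    integrableOn_Ioi_rpow_of_lt (by linarith) ht
  have hle1 : ∀ s ∈ Ioc 0 t, s ^ (a - 1) * (t + s) ^ γ ≤ s ^ (a - 1) * t ^ γ := fun s hs => by
    have := hs.1
    gcongr ?_ * ?_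
    exact rpow_le_rpow_of_nonpos ht (by linarith) hγ0
  have hle2 : ∀ s ∈ Ioi t, s ^ (a - 1) * (t + s) ^ γ ≤ s ^ (a - 1 + γ) := fun s hs => by
    have hs0 : 0 < s := ht.trans hs
    rw [rpow_add hs0]
    gcongr ?_ * ?_
    exact rpow_le_rpow_of_nonpos hs0 (by linarith) hγ0
  have hi1 : IntegrableOn (fun s => s ^ (a - 1) * (t + s) ^ γ) (Ioc 0 t) := by
    refine (hint1.mul_const (t ^ γ)).mono' hm.aestronglyMeasurable
      (ae_restrict_of_forall_mem measurableSet_Ioc fun s hs => ?_)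
    have := hs.1
    rw [norm_of_nonneg (by positivity)]
    exact hle1 s hs
  have hi2 : IntegrableOn (fun s => s ^ (a - 1) * (t + s) ^ γ) (Ioi t) := by
    refine hint2.mono' hm.aestronglyMeasurable
      (ae_restrict_of_forall_mem measurableSet_Ioi fun s hs => ?_)
    have : 0 < s := ht.trans hs
    rw [norm_of_nonneg (by positivity)]
    exact hle2 s hs
  have hunion : Ioc 0 t ∪ Ioi t = Ioi 0 := Ioc_union_Ioi_eq_Ioi ht.le
  refine ⟨hunion ▸ hi1.union hi2, ?_⟩
  rw [← hunion, setIntegral_union (Ioc_disjoint_Ioi le_rfl) measurableSet_Ioi hi1 hi2]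
  have h1 : ∫ s in Ioc 0 t, s ^ (a - 1) * (t + s) ^ γ ≤ 1 / a * t ^ (a + γ) := by
    refine (setIntegral_mono_on hi1 (hint1.mul_const _) measurableSet_Ioc hle1).trans_eq ?_
    rw [integral_mul_const, ← intervalIntegral.integral_of_le ht.le,
      integral_rpow (Or.inl (by linarith)), sub_add_cancel, zero_rpow ha.ne', rpow_add ht]
    ring
  have h2 : ∫ s in Ioi t, s ^ (a - 1) * (t + s) ^ γ ≤ -1 / (a + γ) * t ^ (a + γ) := by
    refine (setIntegral_mono_on hi2 hint2 measurableSet_Ioi hle2).trans_eq ?_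
    rw [integral_Ioi_rpow_of_lt (by linarith) ht, show a - 1 + γ + 1 = a + γ by ring]
    ring
  calc _ ≤ _ := add_le_add h1 h2
    _ = _ := by ring

/-- The density of the Gamma law. -/
noncomputable def gammaWeight (a s : ℝ) : ℝ := 1 / Gamma a * (s ^ (a - 1) * exp (-s))

theorem measurable_gammaWeight (a : ℝ) : Measurable (gammaWeight a) := by
  unfold gammaWeight
  fun_prop

theorem gammaWeight_nonneg {a s : ℝ} (ha : 0 < a) (hs : 0 < s) : 0 ≤ gammaWeight a s := by
  have := Gamma_pos_of_pos ha
  unfold gammaWeight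
  positivity

theorem gammaWeight_le {a s : ℝ} (ha : 0 < a) (hs : 0 < s) :
    gammaWeight a s ≤ 1 / Gamma a * s ^ (a - 1) := by
  have := Gamma_pos_of_pos ha
  have h : exp (-s) ≤ 1 := exp_le_one_iff.2 (by linarith)
  unfold gammaWeight
  gcongr
  exact mul_le_of_le_one_right (by positivity) h

theorem integrableOn_gammaWeight {a : ℝ} (ha : 0 < a) : IntegrableOn (gammaWeight a) (Ioi 0) := by
  have h := (GammaIntegral_convergent ha).const_mul (1 / Gamma a)
  simp only [mul_comm (exp _)] at h
  exact h

theorem integral_gammaWeight {a : ℝ} (ha : 0 < a) : ∫ s in Ioi 0, gammaWeight a s = 1 := by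
  have h := Gamma_eq_integral ha
  simp only [mul_comm (exp _)] at h
  unfold gammaWeight
  rw [integral_const_mul, ← h, one_div_mul_cancel (Gamma_pos_of_pos ha).ne']

section

variable {d : ℕ} {α : Fin d → ℝ}

theorem exists_abs_poissonDeriv_le_of_lipschitz (n k : ℕ) (γ : ℝ) :
    ∃ C > 0, ∀ {d : ℕ} {α : Fin d → ℝ} (_ : ∀ j, -1 < α j) {f : (Fin d → ℝ) → ℝ} {M A : ℝ}
      (_ : Measurable f) (_ : ∀ y ∈ posOrthant d, |f y| ≤ M)
      (_ : ∀ t > 0, ∀ y ∈ posOrthant d, |poissonDeriv α f n t y| ≤ A * t ^ γ)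
      {t : ℝ} (_ : 0 < t) {x : Fin d → ℝ} (_ : x ∈ posOrthant d),
      |poissonDeriv α f (n + k) t x| ≤ C * A * t ^ (γ - k) := by
  obtain ⟨C, hC, h⟩ := exists_abs_poissonDeriv_le k
  refine ⟨C * 2⁻¹ ^ (γ - k), by positivity, fun {d α} hα {f M A} hf hM hA {t} ht {x} hx => ?_⟩
  have h2 : 0 < t / 2 := half_pos ht
  have heq := poissonDeriv_add_eq_poissonDeriv hα hf hM hx n k h2 h2
  rw [add_halves] at heq
  rw [heq]
  refine (h hα (hA (t / 2) h2) h2 hx).trans_eq ?_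
  have hpow : (t / 2) ^ (γ - k) = t ^ (γ - k) * 2⁻¹ ^ (γ - k) := by
    rw [div_eq_mul_inv, mul_rpow ht.le (by norm_num)]
  have hsplit : (t / 2) ^ (γ - k) = (t / 2)⁻¹ ^ k * (t / 2) ^ γ := by
    rw [rpow_sub h2, rpow_natCast, inv_pow, div_eq_inv_mul]
  calc C * (t / 2)⁻¹ ^ k * (A * (t / 2) ^ γ) = C * A * ((t / 2)⁻¹ ^ k * (t / 2) ^ γ) := by ring
    _ = _ := by
      rw [← hsplit, hpow]
      ring

theorem besselLaguerrePotential_eq_integral (hα : ∀ j, -1 < α j) {f : (Fin d → ℝ) → ℝ} {M : ℝ}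
    (hf : Measurable f) (hM : ∀ y ∈ posOrthant d, |f y| ≤ M) (a : ℝ) {x : Fin d → ℝ}
    (hx : x ∈ posOrthant d) :
    besselLaguerrePotential d α a f x = ∫ s in Ioi 0, gammaWeight a s * poissonDeriv α f 0 s x := by
  rw [besselLaguerrePotential, ← integral_const_mul]
  refine setIntegral_congr_fun measurableSet_Ioi fun s hs => ?_
  simp only [plP_eq_integral hα hs hx, poissonDeriv_zero hα hf hM hs hx, gammaWeight]
  ring

theorem abs_poissonDeriv_zero_le (hα : ∀ j, -1 < α j) {f : (Fin d → ℝ) → ℝ} {M : ℝ}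
    (hf : Measurable f) (hM : ∀ y ∈ posOrthant d, |f y| ≤ M) {t : ℝ} (ht : 0 < t)
    {x : Fin d → ℝ} (hx : x ∈ posOrthant d) : |poissonDeriv α f 0 t x| ≤ M := by
  rw [poissonDeriv_zero hα hf hM ht hx]
  exact abs_integral_poissonMeasure_le hα hM ht hx

theorem abs_besselLaguerrePotential_le (hα : ∀ j, -1 < α j) {f : (Fin d → ℝ) → ℝ} {M : ℝ}
    (hf : Measurable f) (hM : ∀ y ∈ posOrthant d, |f y| ≤ M) {a : ℝ} (ha : 0 < a)
    {x : Fin d → ℝ} (hx : x ∈ posOrthant d) : |besselLaguerrePotential d α a f x| ≤ M := by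
  rw [besselLaguerrePotential_eq_integral hα hf hM a hx]
  have h := norm_integral_le_of_norm_le ((integrableOn_gammaWeight ha).mul_const M)
    (f := fun s => gammaWeight a s * poissonDeriv α f 0 s x)
    (ae_restrict_of_forall_mem measurableSet_Ioi fun s hs => by
      rw [norm_mul, norm_of_nonneg (gammaWeight_nonneg ha hs)]
      exact mul_le_mul_of_nonneg_left (abs_poissonDeriv_zero_le hα hf hM hs hx)
        (gammaWeight_nonneg ha hs))
  rwa [integral_mul_const, integral_gammaWeight ha, one_mul] at h

theorem plP_besselLaguerrePotential (hα : ∀ j, -1 < α j) {f : (Fin d → ℝ) → ℝ} {M : ℝ}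
    (hf : Measurable f) (hM : ∀ y ∈ posOrthant d, |f y| ≤ M) {a : ℝ} (ha : 0 < a)
    {x : Fin d → ℝ} (hx : x ∈ posOrthant d) {t : ℝ} (ht : 0 < t) :
    plP d α t (besselLaguerrePotential d α a f) x =
      ∫ s in Ioi 0, gammaWeight a s * poissonDeriv α f 0 (t + s) x := by
  have := isProbabilityMeasure_poissonMeasure hα ht hx
  have hJ : plP d α t (besselLaguerrePotential d α a f) x =
      ∫ y, (∫ s in Ioi 0, gammaWeight a s * poissonDeriv α f 0 s y) ∂poissonMeasure α t x := by
    rw [plP_eq_integral hα ht hx]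
    refine integral_congr_ae ?_
    filter_upwards [ae_poissonMeasure_mem α t x] with y hy
    exact besselLaguerrePotential_eq_integral hα hf hM a hy
  rw [hJ, integral_integral_swap]
  · refine setIntegral_congr_fun measurableSet_Ioi fun s hs => ?_
    rw [integral_const_mul, poissonDeriv_add_eq_integral hα hf hM hx 0 ht hs]
  · have hg : Integrable (fun p : (Fin d → ℝ) × ℝ => gammaWeight a p.2 * M)
        ((poissonMeasure α t x).prod (volume.restrict (Ioi 0))) :=
      Integrable.comp_snd (f := fun s => gammaWeight a s * M)
        ((integrableOn_gammaWeight ha).mul_const M) _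
    have hsw : Measurable fun p : (Fin d → ℝ) × ℝ => (p.2, p.1) := by fun_prop
    have h1 := (measurable_poissonDeriv α hf 0).comp hsw
    have h2 : Measurable fun p : (Fin d → ℝ) × ℝ => gammaWeight a p.2 :=
      (measurable_gammaWeight a).comp measurable_snd
    refine hg.mono' (h2.mul h1).aestronglyMeasurable ?_
    filter_upwards [Measure.quasiMeasurePreserving_fst.ae (ae_poissonMeasure_mem α t x),
      Measure.quasiMeasurePreserving_snd.ae (ae_restrict_mem measurableSet_Ioi)] with p hp1 hp2
    simp only [Function.uncurry_def, norm_mul, norm_of_nonneg (gammaWeight_nonneg ha hp2)]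
    exact mul_le_mul_of_nonneg_left (abs_poissonDeriv_zero_le hα hf hM hp2 hp1)
        (gammaWeight_nonneg ha hp2)

theorem iteratedDeriv_plP_besselLaguerrePotential (hα : ∀ j, -1 < α j) {f : (Fin d → ℝ) → ℝ}
    {M : ℝ} (hf : Measurable f) (hM : ∀ y ∈ posOrthant d, |f y| ≤ M) {a : ℝ} (ha : 0 < a)
    {x : Fin d → ℝ} (hx : x ∈ posOrthant d) (k : ℕ) {t : ℝ} (ht : 0 < t) :
    iteratedDeriv k (fun u => plP d α u (besselLaguerrePotential d α a f) x) t =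
      ∫ s in Ioi 0, gammaWeight a s * poissonDeriv α f k (t + s) x := by
  have hM0 : 0 ≤ M := (abs_nonneg _).trans (hM x hx)
  refine iteratedDeriv_eq_of_hasDerivAt_family
    (w := fun k t => ∫ s in Ioi 0, gammaWeight a s * poissonDeriv α f k (t + s) x)
    (fun t ht => plP_besselLaguerrePotential hα hf hM ha hx ht) (fun k t ht => ?_) k t ht
  refine hasDerivAt_integral_family
    (w := fun k t s => gammaWeight a s * poissonDeriv α f k (t + s) x) ?_ ?_ ?_ k ht
  · intro k t _
    have h1 : Measurable fun s : ℝ => t + s := by fun_prop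
    have h2 := (measurable_poissonDeriv_left α hf k x).comp h1
    exact ((measurable_gammaWeight a).mul h2).aestronglyMeasurable
  · refine ae_restrict_of_forall_mem measurableSet_Ioi fun s hs k t ht => ?_
    exact ((hasDerivAt_poissonDeriv hα hf hM hx k (add_pos ht hs)).comp_add_const t s).const_mul _
  · intro k t ht
    obtain ⟨C, hC, h⟩ := exists_abs_poissonDeriv_le k
    refine ⟨fun s => gammaWeight a s * (C * (t / 2)⁻¹ ^ k * M),
      (integrableOn_gammaWeight ha).mul_const _, ?_⟩
    refine ae_restrict_of_forall_mem measurableSet_Ioi fun s hs u hu => ?_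
    have hs0 : 0 < s := hs
    have hus : t / 2 ≤ u + s := by linarith [hu.1]
    have hus0 : 0 < u + s := by linarith
    rw [abs_mul, abs_of_nonneg (gammaWeight_nonneg ha hs)]
    refine mul_le_mul_of_nonneg_left ?_ (gammaWeight_nonneg ha hs)
    refine (h hα hM hus0 hx).trans ?_
    gcongr

theorem exists_abs_iteratedDeriv_plP_besselLaguerrePotential_le (n k : ℕ) {a γ : ℝ} (ha : 0 < a)
    (hγ : a + (γ - k) < 0) :
    ∃ C > 0, ∀ {d : ℕ} {α : Fin d → ℝ} (_ : ∀ j, -1 < α j) {f : (Fin d → ℝ) → ℝ} {M A : ℝ}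
      (_ : Measurable f) (_ : ∀ y ∈ posOrthant d, |f y| ≤ M)
      (_ : ∀ t > 0, ∀ y ∈ posOrthant d, |poissonDeriv α f n t y| ≤ A * t ^ γ)
      {t : ℝ} (_ : 0 < t) {x : Fin d → ℝ} (_ : x ∈ posOrthant d),
      |iteratedDeriv (n + k) (fun u => plP d α u (besselLaguerrePotential d α a f) x) t| ≤
        C * A * t ^ (a + (γ - k)) := by
  obtain ⟨C, hC, h⟩ := exists_abs_poissonDeriv_le_of_lipschitz n k γ
  have hΓ := Gamma_pos_of_pos ha
  have hpos : 0 < 1 / a - 1 / (a + (γ - k)) := by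
    have h1 : 0 < 1 / a := by positivity
    have h2 : 1 / (a + (γ - k)) < 0 := one_div_neg.2 hγ
    linarith
  refine ⟨1 / Gamma a * C * (1 / a - 1 / (a + (γ - k))), by positivity,
    fun {d α} hα {f M A} hf hM hA {t} ht {x} hx => ?_⟩
  have hA0 : 0 ≤ A := by
    have := (abs_nonneg _).trans (hA 1 one_pos x hx)
    simpa using this
  obtain ⟨hi, hle⟩ := integrableOn_rpow_mul_add_rpow_and_integral_le ha hγ ht
  rw [iteratedDeriv_plP_besselLaguerrePotential hα hf hM ha hx (n + k) ht]
  have hb := norm_integral_le_of_norm_le (hi.const_mul (1 / Gamma a * (C * A)))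
    (f := fun s => gammaWeight a s * poissonDeriv α f (n + k) (t + s) x)
    (ae_restrict_of_forall_mem measurableSet_Ioi fun s hs => by
      have hs0 : 0 < s := hs
      have hts : 0 < t + s := by positivity
      rw [norm_mul, norm_of_nonneg (gammaWeight_nonneg ha hs)]
      calc gammaWeight a s * ‖poissonDeriv α f (n + k) (t + s) x‖
          ≤ (1 / Gamma a * s ^ (a - 1)) * (C * A * (t + s) ^ (γ - k)) :=
            mul_le_mul (gammaWeight_le ha hs) (h hα hf hM hA hts hx) (norm_nonneg _)
              (by positivity)
        _ = _ := by ring)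
  rw [integral_const_mul] at hb
  refine hb.trans ?_
  calc _ ≤ 1 / Gamma a * (C * A) * ((1 / a - 1 / (a + (γ - k))) * t ^ (a + (γ - k))) := by gcongr
    _ = _ := by ring

end

theorem besselLaguerrePotential_bounded_on_lipschitz
    (d : ℕ) (hd : 1 ≤ d) (α : Fin d → ℝ) (hα : ∀ j, -(1 / 2 : ℝ) < α j)
    (β lam : ℝ) (hβ : 0 < β) (hlam : 0 < lam) :
    ∃ C > 0, ∀ (f : (Fin d → ℝ) → ℝ) (M A : ℝ), Measurable f → (∀ y, |f y| ≤ M) →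
      (∀ t > (0 : ℝ), ∀ x ∈ posOrthant d,
        |iteratedDeriv (⌊β⌋₊ + 1) (fun u => plP d α u f x) t| ≤
          A * t ^ (β - ((⌊β⌋₊ : ℝ) + 1))) →
      (∀ t > (0 : ℝ), ∀ x ∈ posOrthant d,
        |plP d α t (besselLaguerrePotential d α lam f) x| ≤ M) ∧
      (∀ t > (0 : ℝ), ∀ x ∈ posOrthant d,
        |iteratedDeriv (⌊β + lam⌋₊ + 1)
            (fun u => plP d α u (besselLaguerrePotential d α lam f) x) t| ≤
          C * (M + A) * t ^ (β + lam - ((⌊β + lam⌋₊ : ℝ) + 1))) := by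
  have hα' (j : Fin d) : -1 < α j := by linarith [hα j]
  obtain ⟨k, hk⟩ := Nat.exists_eq_add_of_le
    (Nat.add_le_add_right (Nat.floor_mono (by linarith : β ≤ β + lam)) 1)
  have hk' : (⌊β + lam⌋₊ : ℝ) + 1 = (⌊β⌋₊ : ℝ) + 1 + k := by exact_mod_cast hk
  have hexp : lam + (β - ((⌊β⌋₊ : ℝ) + 1) - k) = β + lam - ((⌊β + lam⌋₊ : ℝ) + 1) := by
    rw [hk']
    ring
  have hneg : lam + (β - ((⌊β⌋₊ : ℝ) + 1) - k) < 0 := by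
    linarith [Nat.lt_floor_add_one (β + lam)]
  obtain ⟨C, hC, h⟩ := exists_abs_iteratedDeriv_plP_besselLaguerrePotential_le (⌊β⌋₊ + 1) k hlam
    hneg
  refine ⟨C, hC, fun f M A hf hM hA => ⟨fun t ht x hx => ?_, fun t ht x hx => ?_⟩⟩
  · rw [plP_eq_integral hα' ht hx]
    exact abs_integral_poissonMeasure_le hα'
      (fun y hy => abs_besselLaguerrePotential_le hα' hf (fun z _ => hM z) hlam hy) ht hx
  · have hM0 : 0 ≤ M := (abs_nonneg _).trans (hM x)
    have hbound := h hα' hf (fun z _ => hM z) (fun s hs y hy => by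
      rw [← iteratedDeriv_plP hα' hf (fun z _ => hM z) hy _ hs]
      exact hA s hs y hy) ht hx
    rw [hk, ← hexp]
    refine hbound.trans ?_
    gcongr
    linarith
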